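/- For every real number γ with 0 < γ < 1 there exists a constant C > 0, depending only on n, p, α, γ, C₁ and C₂, with the following property: let 0 < r₁ < r₂ and h ≥ 0 be real numbers and let v be a nonnegative continuous function on the closed annulus {r₁ ≤ |x| ≤ r₂} which is C¹ on the open annulus B_{r₁,r₂} and a solution of div A(x,Dv) + b(x)|Dv|^α ≥ χ_ω(x)·h in B_{r₁,r₂}, where ω = {x ∈ B_{r₁,r₂} : v(x) > 0} and χ_ω is the characteristic function of ω. Suppose that ρ ↦ M(ρ;v) is nondecreasing on [r₁, r₂], that M(r₂;v) > M(r₁;v) ≥ γ·M(r₂;v), and that (M(r₂;v) − M(r₁;v))^{α−p+1}·(r₂ − r₁)^{p−α}·ess sup_{B_{r₁,r₂}} b ≤ C₁/4. Then (M(r₂;v) − M(r₁;v))^{p−1} ≥ C·(r₂ − r₁)^p·h. -/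

import Mathlib

open MeasureTheory Metric Set Filter
open scoped RealInnerProductSpace ENNReal

noncomputable section

abbrev Euc (n : ℕ) := EuclideanSpace ℝ (Fin n)

/-- Weak solution of `div A(x,Dv) + b(x)|Dv|^α ≥ a(x)` on an open set `U`:
for every nonnegative test function `φ ∈ C₀^∞(U)`,
`-∫ A(x,Dv)·Dφ + ∫ b |Dv|^α φ ≥ ∫ a φ`. -/
def IsWeakSol {n : ℕ} (A : Euc n → Euc n → Euc n) (b : Euc n → ℝ) (α : ℝ)
    (a : Euc n → ℝ) (U : Set (Euc n)) (v : Euc n → ℝ) : Prop :=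
  ∀ φ : Euc n → ℝ, ContDiff ℝ (⊤ : ℕ∞) φ → HasCompactSupport φ → tsupport φ ⊆ U →
    (∀ x, 0 ≤ φ x) →
    (∫ x in U, a x * φ x) ≤
      (-(∫ x in U, ⟪A x (gradient v x), gradient φ x⟫)) +
        ∫ x in U, b x * ‖gradient v x‖ ^ α * φ x

/-- Structural conditions on `A`: measurability, coercivity and growth. -/
def StructCond {n : ℕ} (A : Euc n → Euc n → Euc n) (p C₁ C₂ : ℝ) : Prop :=
  Measurable (Function.uncurry A) ∧
    ∀ x ζ : Euc n, C₁ * ‖ζ‖ ^ p ≤ ⟪ζ, A x ζ⟫ ∧ ‖A x ζ‖ ≤ C₂ * ‖ζ‖ ^ (p - 1)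

/-- Locally bounded function on `ℝⁿ`. -/
def LocBdd {n : ℕ} (b : Euc n → ℝ) : Prop :=
  ∀ K : Set (Euc n), IsCompact K → ∃ C, ∀ x ∈ K, b x ≤ C

/-- `M(r; u) = max_{|x| = r} u x`. -/
def sphMax {n : ℕ} (u : Euc n → ℝ) (r : ℝ) : ℝ := sSup (u '' Metric.sphere (0 : Euc n) r)

/-- `g_θ(t) = inf_{s ∈ (t/θ, θ t)} g s`. -/
def ginf (g : ℝ → ℝ) (θ t : ℝ) : ℝ := sInf (g '' Set.Ioo (t / θ) (θ * t))

/-- The open annulus `{x : r₁ < |x| < r₂}`. -/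
def Ann (n : ℕ) (r₁ r₂ : ℝ) : Set (Euc n) := {x : Euc n | r₁ < ‖x‖ ∧ ‖x‖ < r₂}

/-- `q_σ(r) = ess inf_{r/σ < |x| < σ r} q x`. -/
def qinf {n : ℕ} (q : Euc n → ℝ) (σ r : ℝ) : ℝ :=
  essInf q (volume.restrict (Ann n (r / σ) (σ * r)))

/-- `f_σ(r) = q_σ(r) / (1 + r q_σ(r)^{(α-p+1)/α} ess sup_{r/σ<|x|<σr} b^{(p-1)/α})`. -/
def fdef {n : ℕ} (q b : Euc n → ℝ) (p α σ r : ℝ) : ℝ :=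
  qinf q σ r /
    (1 + r * qinf q σ r ^ ((α - p + 1) / α) *
      essSup (fun x => b x ^ ((p - 1) / α)) (volume.restrict (Ann n (r / σ) (σ * r))))

/-!
Let `δ = M(r₂; v) - M(r₁; v)` and let `y` maximise `v` on the middle sphere of the annulus. On a
ball of radius `R ∼ r₂ - r₁` around `y` the solution exceeds `v y` by at most `δ`, and at the
gradient scale `δ / R` the smallness of `b` lets the coercivity of `A` absorb the first order term.
Testing with `(v - k)₊² ηᵖ`, where `η` is a cutoff function, thus gives a Caccioppoli
inequality with constants depending only on the structure. By the De Giorgi iteration, a point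
where `v` exceeds the level `k` by a multiple of `δ` carries an excess of integral at least
`θ δ Rⁿ`. The term with `h` in the Caccioppoli inequality is then at least of order
`h δ² Rⁿ`, while the right-hand side is at most of order `(δ / R)ᵖ δ Rⁿ`.
-/

section RealInequalities

lemma rpow_sub_one_mul_le_add {p ε x z : ℝ} (hp : 1 < p) (hε : 0 < ε) (hx : 0 ≤ x) (hz : 0 ≤ z) :
    x ^ (p - 1) * z ≤ ε * x ^ p + ε ^ (1 - p) * z ^ p := by
  have rpow_mul_self {y : ℝ} (hy : 0 ≤ y) : y ^ (p - 1) * y = y ^ p := by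
    rw [← Real.rpow_add_one' hy (by linarith), sub_add_cancel]
  rcases le_total z (ε * x) with hzx | hxz
  · calc x ^ (p - 1) * z ≤ x ^ (p - 1) * (ε * x) := by gcongr
      _ = ε * x ^ p := by rw [← rpow_mul_self hx]; ring
      _ ≤ ε * x ^ p + ε ^ (1 - p) * z ^ p := le_add_of_nonneg_right (by positivity)
  · calc x ^ (p - 1) * z ≤ (z / ε) ^ (p - 1) * z := by
          gcongr
          rwa [le_div_iff₀' hε]
      _ = ε ^ (1 - p) * z ^ p := by
          rw [Real.div_rpow hz hε.le, ← rpow_mul_self hz, ← neg_sub p 1, Real.rpow_neg hε.le]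
          ring
      _ ≤ ε * x ^ p + ε ^ (1 - p) * z ^ p := le_add_of_nonneg_left (by positivity)

lemma rpow_le_rpow_add_rpow {a b c s : ℝ} (hs : 0 ≤ s) (ha : 0 ≤ a) (hab : a ≤ b) (hbc : b ≤ c) :
    s ^ b ≤ s ^ a + s ^ c := by
  rcases le_total s 1 with hs1 | hs1
  · exact le_add_of_le_of_nonneg (Real.rpow_le_rpow_of_exponent_ge_of_imp hs hs1 hab
      fun _ hb ↦ by linarith) (by positivity)
  · exact le_add_of_nonneg_of_le (by positivity) (Real.rpow_le_rpow_of_exponent_le hs1 hbc)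

lemma rpow_sub_one_mul_max_sub_le_rpow {d r t : ℝ} (hd : 0 < d) (hr : 1 ≤ r) (ht : 0 ≤ t) :
    d ^ (r - 1) * max (t - d) 0 ≤ t ^ r := by
  rcases le_total t d with htd | hdt
  · rw [max_eq_right (by linarith), mul_zero]
    positivity
  · calc d ^ (r - 1) * max (t - d) 0 ≤ t ^ (r - 1) * t := by
          gcongr
          exact max_le (by linarith) ht
      _ = t ^ r := by rw [← Real.rpow_add_one' ht (by linarith), sub_add_cancel]

lemma tendsto_zero_of_succ_le_mul_pow_mul_rpow {M B q : ℝ} {z : ℕ → ℝ} (hM : 0 ≤ M) (hB : 1 < B)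
    (hq : 1 < q) (hz : ∀ j, 0 ≤ z j) (hsucc : ∀ j, z (j + 1) ≤ M * B ^ j * z j ^ q)
    (hzero : M * z 0 ^ (q - 1) ≤ B ^ (-(q - 1)⁻¹)) :
    Tendsto z atTop (nhds 0) := by
  have hB0 : 0 < B := by linarith
  have hq1 : 0 < q - 1 := by linarith
  set r := B ^ (-(q - 1)⁻¹)
  have hr0 : 0 < r := by positivity
  have hr1 : r < 1 := Real.rpow_lt_one_of_one_lt_of_neg hB (by simpa using hq1)
  have hBr : B * r ^ (q - 1) = 1 := by
    rw [← Real.rpow_mul hB0.le, neg_mul, inv_mul_cancel₀ hq1.ne', Real.rpow_neg_one,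
      mul_inv_cancel₀ hB0.ne']
  have hgeom : ∀ j, z j ≤ z 0 * r ^ j := by
    intro j
    induction j with
    | zero => simp
    | succ j ih =>
      calc z (j + 1) ≤ M * B ^ j * (z 0 * r ^ j) ^ q := (hsucc j).trans <| by
            have := hz j
            gcongr
        _ = (M * z 0 ^ (q - 1)) * z 0 * r ^ j * (B * r ^ (q - 1)) ^ j := by
            rw [← sub_add_cancel q 1, Real.rpow_add_one' (mul_nonneg (hz 0) (by positivity))
              (by linarith), Real.mul_rpow (hz 0) (by positivity), ← Real.rpow_pow_comm hr0.le,
              add_sub_cancel_right]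
            ring
        _ ≤ r * z 0 * r ^ j * (B * r ^ (q - 1)) ^ j := by
            have := hz 0
            gcongr
        _ = z 0 * r ^ (j + 1) := by rw [hBr]; ring
  refine squeeze_zero hz hgeom ?_
  simpa using (tendsto_pow_atTop_nhds_zero_of_lt_one hr0.le hr1).const_mul (z 0)

end RealInequalities

section Truncation

lemma hasDerivAt_max_zero_sq (s : ℝ) : HasDerivAt (fun t : ℝ ↦ max t 0 ^ 2) (2 * max s 0) s := by
  rcases lt_trichotomy s 0 with hs | rfl | hs
  · rw [max_eq_right hs.le, mul_zero]
    refine (hasDerivAt_const s 0).congr_of_eventuallyEq ?_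
    filter_upwards [Iio_mem_nhds hs] with t ht
    simp [max_eq_right (mem_Iio.1 ht).le]
  · rw [max_self, mul_zero, hasDerivAt_iff_isLittleO_nhds_zero]
    refine (Asymptotics.isBigO_of_le _ fun t ↦ ?_).trans_isLittleO
      (Asymptotics.isLittleO_pow_id one_lt_two)
    rcases le_total t 0 with ht | ht
    · simp [ht, sq_nonneg]
    · simp [ht]
  · rw [max_eq_left hs.le]
    refine HasDerivAt.congr_of_eventuallyEq (by simpa using hasDerivAt_pow 2 s) ?_
    filter_upwards [Ioi_mem_nhds hs] with t ht
    simp [max_eq_left (mem_Ioi.1 ht).le]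

lemma contDiff_max_zero_sq : ContDiff ℝ 1 fun t : ℝ ↦ max t 0 ^ 2 := by
  rw [contDiff_one_iff_deriv, funext fun s ↦ (hasDerivAt_max_zero_sq s).deriv]
  exact ⟨fun s ↦ (hasDerivAt_max_zero_sq s).differentiableAt, by fun_prop⟩

/-- The excess `(v - k)₊` of `v` over the level `k`. -/
def excess {E : Type*} (v : E → ℝ) (k : ℝ) (x : E) : ℝ := max (v x - k) 0

variable {E : Type*} {v : E → ℝ} {k : ℝ} {x : E}

lemma excess_nonneg (v : E → ℝ) (k : ℝ) (x : E) : 0 ≤ excess v k x := le_max_right _ _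

lemma excess_le {m : ℝ} (hm : 0 ≤ m) (hvx : v x ≤ k + m) : excess v k x ≤ m :=
  max_le (by linarith) hm

lemma excess_eq_zero (hvx : v x ≤ k) : excess v k x = 0 := max_eq_right (by linarith)

lemma excess_anti {k' : ℝ} (h : k ≤ k') (v : E → ℝ) (x : E) : excess v k' x ≤ excess v k x :=
  max_le_max (by linarith) le_rfl

lemma excess_add {d : ℝ} (hd : 0 ≤ d) (v : E → ℝ) (k : ℝ) (x : E) :
    excess v (k + d) x = max (excess v k x - d) 0 := by
  rw [excess, excess, ← max_sub_sub_right, max_assoc, max_eq_right (a := 0 - d) (by linarith),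
    sub_sub]

lemma continuousOn_excess [TopologicalSpace E] {s : Set E} (hv : ContinuousOn v s) (k : ℝ) :
    ContinuousOn (excess v k) s :=
  (hv.sub continuousOn_const).sup continuousOn_const

variable [NormedAddCommGroup E] [NormedSpace ℝ E] {U : Set E} {ζ : E → ℝ}

lemma fderiv_excess_sq_mul (hv : DifferentiableAt ℝ v x) (hζ : DifferentiableAt ℝ ζ x)
    (k : ℝ) :
    fderiv ℝ (fun x ↦ excess v k x ^ 2 * ζ x) x =
      (2 * excess v k x * ζ x) • fderiv ℝ v x + excess v k x ^ 2 • fderiv ℝ ζ x := by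
  have hsq : HasFDerivAt (fun x ↦ excess v k x ^ 2) ((2 * excess v k x) • fderiv ℝ v x) x :=
    (hasDerivAt_max_zero_sq _).comp_hasFDerivAt x (hv.hasFDerivAt.sub_const k)
  refine (hsq.mul hζ.hasFDerivAt).fderiv.trans ?_
  rw [add_comm, smul_smul, mul_comm (ζ x)]

lemma contDiff_excess_sq_mul (hU : IsOpen U) (hv : ContDiffOn ℝ 1 v U) (hζ : ContDiff ℝ 1 ζ)
    (hζU : tsupport ζ ⊆ U) (k : ℝ) : ContDiff ℝ 1 fun x ↦ excess v k x ^ 2 * ζ x := by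
  refine contMDiff_iff_contDiff.1 <| contMDiff_of_tsupport fun x hx ↦
    contMDiffAt_iff_contDiffAt.2 ?_
  have hvx : ContDiffAt ℝ 1 v x :=
    hv.contDiffAt (hU.mem_nhds (hζU (tsupport_mul_subset_right hx)))
  exact (contDiff_max_zero_sq.contDiffAt.comp x (hvx.sub contDiffAt_const)).mul hζ.contDiffAt

end Truncation

section Cutoff

variable {E : Type*} [NormedAddCommGroup E]

/-- `η` is a cutoff function for `K` with Lipschitz bound `L`: a `C¹` function with values in
`[0, 1]`, supported in `K`, whose gradient is at most `L`. -/
structure IsCutoff [NormedSpace ℝ E] (η : E → ℝ) (K : Set E) (L : ℝ) : Prop where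
  contDiff : ContDiff ℝ 1 η
  tsupport_subset : tsupport η ⊆ K
  nonneg : ∀ x, 0 ≤ η x
  le_one : ∀ x, η x ≤ 1
  norm_fderiv_le : ∀ x, ‖fderiv ℝ η x‖ ≤ L

lemma IsCutoff.mono_right [NormedSpace ℝ E] {η : E → ℝ} {K : Set E} {L L' : ℝ}
    (hη : IsCutoff η K L) (hL : L ≤ L') : IsCutoff η K L' :=
  { hη with norm_fderiv_le := fun x ↦ (hη.norm_fderiv_le x).trans hL }

/-- The radial cutoff function `(1 - |x - y|² / ρ²)₊²` of the ball of radius `ρ` around `y`. -/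
def quadCutoff (y : E) (ρ : ℝ) (x : E) : ℝ := max (1 - ‖x - y‖ ^ 2 / ρ ^ 2) 0 ^ 2

variable {y : E} {ρ : ℝ}

lemma support_quadCutoff_subset (y : E) (hρ : 0 < ρ) :
    Function.support (quadCutoff y ρ) ⊆ closedBall y ρ := by
  intro x hx
  contrapose! hx
  have hρx : ρ < ‖x - y‖ := by simpa [dist_eq_norm] using hx
  have : 1 ≤ ‖x - y‖ ^ 2 / ρ ^ 2 := by
    rw [one_le_div (by positivity)]
    gcongr
  simp [quadCutoff, max_eq_right (sub_nonpos.2 this)]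

lemma sq_div_le_quadCutoff {ρ' : ℝ} {x : E} (hρ : 0 < ρ) (hρ' : ρ' ≤ ρ)
    (hx : x ∈ closedBall y ρ') : ((ρ - ρ') / ρ) ^ 2 ≤ quadCutoff y ρ x := by
  have hxy : ‖x - y‖ ≤ ρ' := by rwa [← dist_eq_norm]
  have hratio : ‖x - y‖ / ρ ≤ ρ' / ρ := by gcongr
  have hratio_one : ρ' / ρ ≤ 1 := (div_le_one hρ).2 hρ'
  refine pow_le_pow_left₀ (div_nonneg (by linarith) hρ.le) (le_max_of_le_left ?_) 2
  rw [sub_div, div_self hρ.ne', ← div_pow]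
  nlinarith [div_nonneg (norm_nonneg (x - y)) hρ.le]

variable [InnerProductSpace ℝ E]

lemma contDiff_quadCutoff (y : E) (ρ : ℝ) : ContDiff ℝ 1 (quadCutoff y ρ) :=
  contDiff_max_zero_sq.comp <|
    contDiff_const.sub (((contDiff_id.sub contDiff_const).norm_sq ℝ).div_const _)

lemma fderiv_quadCutoff (y : E) (ρ : ℝ) (x : E) :
    fderiv ℝ (quadCutoff y ρ) x =
      -(2 * max (1 - ‖x - y‖ ^ 2 / ρ ^ 2) 0 * (2 / ρ ^ 2)) • innerSL ℝ (x - y) := by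
  have hdist : HasFDerivAt (fun x ↦ 1 - ‖x - y‖ ^ 2 / ρ ^ 2)
      (-((ρ ^ 2)⁻¹ • (2 • innerSL ℝ (x - y)))) x := by
    simpa [div_eq_mul_inv] using
      ((((hasFDerivAt_id x).sub_const y).norm_sq).mul_const (ρ ^ 2)⁻¹).const_sub 1
  refine ((hasDerivAt_max_zero_sq _).comp_hasFDerivAt x hdist).fderiv.trans ?_
  ext z
  simp only [smul_apply, neg_apply, smul_eq_mul,
    innerSL_apply_apply, nsmul_eq_mul, Nat.cast_ofNat]
  ring

lemma isCutoff_quadCutoff (y : E) (hρ : 0 < ρ) :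
    IsCutoff (quadCutoff y ρ) (closedBall y ρ) (4 / ρ) where
  contDiff := contDiff_quadCutoff y ρ
  tsupport_subset := closure_minimal (support_quadCutoff_subset y hρ) isClosed_closedBall
  nonneg _ := sq_nonneg _
  le_one x := pow_le_one₀ (le_max_right _ _)
    (max_le (sub_le_self _ (by positivity)) zero_le_one)
  norm_fderiv_le x := by
    by_cases hx : x ∈ closedBall y ρ
    · have hxy : ‖x - y‖ ≤ ρ := by rwa [← dist_eq_norm]
      have hmax : max (1 - ‖x - y‖ ^ 2 / ρ ^ 2) 0 ≤ 1 :=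
        max_le (sub_le_self _ (by positivity)) zero_le_one
      rw [fderiv_quadCutoff, neg_smul, norm_neg, norm_smul, innerSL_apply_norm,
        Real.norm_of_nonneg (by positivity)]
      calc 2 * max (1 - ‖x - y‖ ^ 2 / ρ ^ 2) 0 * (2 / ρ ^ 2) * ‖x - y‖
          ≤ 2 * 1 * (2 / ρ ^ 2) * ρ := by gcongr
        _ = 4 / ρ := by field_simp; norm_num
    · have hx' : x ∉ Function.support (fderiv ℝ (quadCutoff y ρ)) := fun h ↦ hx <|
        closure_minimal (support_quadCutoff_subset y hρ) isClosed_closedBall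
          (support_fderiv_subset ℝ h)
      rw [Function.notMem_support.1 hx', norm_zero]
      positivity

end Cutoff

section Mollification

variable {E : Type*} [NormedAddCommGroup E] [NormedSpace ℝ E] {φ : E → ℝ}

lemma tsupport_convolution_bump_subset [FiniteDimensional ℝ E] [HasContDiffBump E]
    [MeasurableSpace E] [BorelSpace E] (μ : Measure E) [μ.IsAddHaarMeasure]
    (B : ContDiffBump (0 : E)) (φ : E → ℝ) :
    tsupport (convolution (B.normed μ) φ (ContinuousLinearMap.lsmul ℝ ℝ) μ) ⊆
      cthickening B.rOut (tsupport φ) := by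
  refine closure_minimal (fun x hx ↦ ?_) isClosed_cthickening
  obtain ⟨a, ha, y, hy, rfl⟩ := Set.mem_add.1 (support_convolution_subset _ (μ := μ) hx)
  rw [B.support_normed_eq, mem_ball_zero_iff] at ha
  refine mem_cthickening_of_dist_le _ y _ _ (subset_tsupport _ hy) ?_
  simpa using ha.le

variable [FiniteDimensional ℝ E]

lemma fderiv_convolution_right [MeasurableSpace E] [BorelSpace E] {μ : Measure E}
    [μ.IsAddHaarMeasure] {f : E → ℝ} (hf : LocallyIntegrable f μ) (hφ : ContDiff ℝ 1 φ)
    (hc : HasCompactSupport φ) (x : E) :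
    fderiv ℝ (convolution f φ (ContinuousLinearMap.lsmul ℝ ℝ) μ) x =
      convolution f (fderiv ℝ φ) (ContinuousLinearMap.lsmul ℝ ℝ) μ x := by
  refine (hc.hasFDerivAt_convolution_right (ContinuousLinearMap.lsmul ℝ ℝ) hf hφ x).fderiv.trans ?_
  congr 1

lemma exists_contDiff_approx_of_contDiff_one [HasContDiffBump E] (hφ : ContDiff ℝ 1 φ)
    (hc : HasCompactSupport φ) (hφ0 : ∀ x, 0 ≤ φ x) {ε r : ℝ} (hε : 0 < ε) (hr : 0 < r) :
    ∃ ψ : E → ℝ, ContDiff ℝ (⊤ : ℕ∞) ψ ∧ tsupport ψ ⊆ cthickening r (tsupport φ) ∧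
      (∀ x, 0 ≤ ψ x) ∧ (∀ x, |ψ x - φ x| ≤ ε) ∧ ∀ x, ‖fderiv ℝ ψ x - fderiv ℝ φ x‖ ≤ ε := by
  let := borel E
  have : BorelSpace E := ⟨rfl⟩
  let μ : Measure E := Measure.addHaar
  have hdφ : Continuous (fderiv ℝ φ) := hφ.continuous_fderiv one_ne_zero
  obtain ⟨δ₀, hδ₀, hφδ⟩ := Metric.uniformContinuous_iff.1
    (hc.uniformContinuous_of_continuous hφ.continuous) ε hε
  obtain ⟨δ₁, hδ₁, hdφδ⟩ := Metric.uniformContinuous_iff.1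
    ((hc.fderiv ℝ).uniformContinuous_of_continuous hdφ) ε hε
  have hδ : 0 < min r (min δ₀ δ₁) := by positivity
  let B : ContDiffBump (0 : E) := ⟨min r (min δ₀ δ₁) / 2, min r (min δ₀ δ₁), by positivity,
    half_lt_self hδ⟩
  have hBr : B.rOut ≤ r := min_le_left _ _
  have hB₀ : B.rOut ≤ δ₀ := (min_le_right _ _).trans (min_le_left _ _)
  have hB₁ : B.rOut ≤ δ₁ := (min_le_right _ _).trans (min_le_right _ _)
  refine ⟨convolution (B.normed μ) φ (ContinuousLinearMap.lsmul ℝ ℝ) μ,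
    B.hasCompactSupport_normed.contDiff_convolution_left _ B.contDiff_normed
      hφ.continuous.locallyIntegrable,
    (tsupport_convolution_bump_subset μ B φ).trans (cthickening_mono hBr _),
    fun x ↦ integral_nonneg fun t ↦ mul_nonneg (B.nonneg_normed t) (hφ0 _), fun x ↦ ?_,
    fun x ↦ ?_⟩
  · rw [← Real.dist_eq]
    exact B.dist_normed_convolution_le hφ.continuous.aestronglyMeasurable
      fun z hz ↦ (hφδ (lt_of_lt_of_le hz hB₀)).le
  · rw [fderiv_convolution_right B.continuous_normed.locallyIntegrable hφ hc, ← dist_eq_norm]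
    exact B.dist_normed_convolution_le hdφ.aestronglyMeasurable
      fun z hz ↦ (hdφδ (lt_of_lt_of_le hz hB₁)).le

end Mollification

section TestFunctions

variable {E : Type*} [NormedAddCommGroup E] [MeasurableSpace E] {μ : Measure E} {U K : Set E}
  {g φ : E → ℝ} {G : E → E}

lemma integrable_mul_of_tsupport_subset [BorelSpace E] (hg : LocallyIntegrableOn g U μ)
    (hφ : Continuous φ) (hc : HasCompactSupport φ) (hφU : tsupport φ ⊆ U) :
    Integrable (fun x ↦ g x * φ x) μ :=
  (integrableOn_iff_integrable_of_support_subset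
    ((Function.support_mul_subset_right g φ).trans (subset_tsupport φ))).1 <|
    (hg.integrableOn_compact_subset hφU hc).mul_continuousOn hφ.continuousOn hc

variable [NormedSpace ℝ E]

lemma setIntegral_mul_sub_fderiv_eq (hU : MeasurableSet U) (hKU : K ⊆ U) (hφK : tsupport φ ⊆ K)
    (g : E → ℝ) (G : E → E) :
    ∫ x in U, (g x * φ x - fderiv ℝ φ x (G x)) ∂μ =
      ∫ x in K, (g x * φ x - fderiv ℝ φ x (G x)) ∂μ := by
  refine setIntegral_eq_of_subset_of_forall_sdiff_eq_zero hU hKU fun x hx ↦ ?_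
  have hxφ : x ∉ tsupport φ := fun h ↦ hx.2 (hφK h)
  rw [image_eq_zero_of_notMem_tsupport hxφ,
    Function.notMem_support.1 fun h ↦ hxφ (support_fderiv_subset ℝ h)]
  simp

variable [FiniteDimensional ℝ E] [BorelSpace E]

lemma integrable_fderiv_apply_of_tsupport_subset (hG : LocallyIntegrableOn G U μ)
    (hφ : ContDiff ℝ 1 φ) (hc : HasCompactSupport φ) (hφU : tsupport φ ⊆ U) :
    Integrable (fun x ↦ fderiv ℝ φ x (G x)) μ := by
  have hdφ : Continuous (fderiv ℝ φ) := hφ.continuous_fderiv one_ne_zero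
  obtain ⟨C, hC⟩ := hdφ.bounded_above_of_compact_support (hc.fderiv ℝ)
  have hGφ : IntegrableOn G (tsupport φ) μ := hG.integrableOn_compact_subset hφU hc
  refine (integrableOn_iff_integrable_of_support_subset (s := tsupport φ) ?_).1 <|
    (hGφ.norm.const_mul C).mono' ?_ <| .of_forall fun x ↦ (fderiv ℝ φ x).le_of_opNorm_le (hC x) _
  · exact fun x hx ↦ support_fderiv_subset ℝ fun h ↦ hx (by simp [h])
  · exact (ContinuousLinearMap.id ℝ (E →L[ℝ] ℝ)).aestronglyMeasurable_comp₂
      hdφ.aestronglyMeasurable hGφ.aestronglyMeasurable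

lemma integrable_mul_sub_fderiv_of_tsupport_subset (hg : LocallyIntegrableOn g U μ)
    (hG : LocallyIntegrableOn G U μ) (hφ : ContDiff ℝ 1 φ) (hc : HasCompactSupport φ)
    (hφU : tsupport φ ⊆ U) : Integrable (fun x ↦ g x * φ x - fderiv ℝ φ x (G x)) μ :=
  (integrable_mul_of_tsupport_subset hg hφ.continuous hc hφU).sub
    (integrable_fderiv_apply_of_tsupport_subset hG hφ hc hφU)

lemma setIntegral_mul_sub_fderiv_le_add {ψ : E → ℝ} {ε : ℝ} (hK : IsCompact K)
    (hg : LocallyIntegrableOn g K μ) (hG : LocallyIntegrableOn G K μ)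
    (hφ : ContDiff ℝ 1 φ) (hφK : tsupport φ ⊆ K) (hψ : ContDiff ℝ 1 ψ) (hψK : tsupport ψ ⊆ K)
    (hψφ : ∀ x, |ψ x - φ x| ≤ ε) (hdψφ : ∀ x, ‖fderiv ℝ ψ x - fderiv ℝ φ x‖ ≤ ε) :
    ∫ x in K, (g x * ψ x - fderiv ℝ ψ x (G x)) ∂μ ≤
      ∫ x in K, (g x * φ x - fderiv ℝ φ x (G x)) ∂μ + ε * ∫ x in K, (|g x| + ‖G x‖) ∂μ := by
  have integrable_test {χ : E → ℝ} (hχ : ContDiff ℝ 1 χ) (hχK : tsupport χ ⊆ K) :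
      IntegrableOn (fun x ↦ g x * χ x - fderiv ℝ χ x (G x)) K μ :=
    (integrable_mul_sub_fderiv_of_tsupport_subset hg hG hχ
      (hK.of_isClosed_subset (isClosed_tsupport χ) hχK) hχK).integrableOn
  have hN : IntegrableOn (fun x ↦ |g x| + ‖G x‖) K μ :=
    (hg.integrableOn_isCompact hK).abs.add (hG.integrableOn_isCompact hK).norm
  rw [← integral_const_mul, ← integral_add (integrable_test hφ hφK) (hN.const_mul ε)]
  refine setIntegral_mono (integrable_test hψ hψK)
    ((integrable_test hφ hφK).add (hN.const_mul ε)) fun x ↦ ?_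
  have hg_mul : g x * (ψ x - φ x) ≤ |g x| * ε :=
    (le_abs_self _).trans ((abs_mul _ _).trans_le (by gcongr; exact hψφ x))
  have hG_apply : |(fderiv ℝ ψ x - fderiv ℝ φ x) (G x)| ≤ ε * ‖G x‖ :=
    (fderiv ℝ ψ x - fderiv ℝ φ x).le_of_opNorm_le (hdψφ x) (G x)
  rw [sub_apply] at hG_apply
  linarith [neg_le_of_abs_le hG_apply]

lemma setIntegral_mul_sub_fderiv_nonneg_of_contDiff_one [HasContDiffBump E] (hU : IsOpen U)
    (hg : LocallyIntegrableOn g U μ) (hG : LocallyIntegrableOn G U μ)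
    (hsmooth : ∀ ψ : E → ℝ, ContDiff ℝ (⊤ : ℕ∞) ψ → HasCompactSupport ψ → tsupport ψ ⊆ U →
      (∀ x, 0 ≤ ψ x) → 0 ≤ ∫ x in U, (g x * ψ x - fderiv ℝ ψ x (G x)) ∂μ)
    (hφ : ContDiff ℝ 1 φ) (hc : HasCompactSupport φ) (hφU : tsupport φ ⊆ U)
    (hφ0 : ∀ x, 0 ≤ φ x) :
    0 ≤ ∫ x in U, (g x * φ x - fderiv ℝ φ x (G x)) ∂μ := by
  obtain ⟨r, hr, hrU⟩ := hc.isCompact.exists_cthickening_subset_open hU hφU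
  set K := cthickening r (tsupport φ)
  have hK : IsCompact K := hc.isCompact.cthickening
  have hφK : tsupport φ ⊆ K := self_subset_cthickening _
  set N := ∫ x in K, (|g x| + ‖G x‖) ∂μ
  have : 0 ≤ N := integral_nonneg fun x ↦ by positivity
  refine le_of_forall_pos_le_add fun ε hε ↦ ?_
  obtain ⟨ψ, hψ, hψK, hψ0, hψφ, hdψφ⟩ := exists_contDiff_approx_of_contDiff_one hφ hc hφ0
    (show 0 < ε / (N + 1) by positivity) hr
  have hpos := hsmooth ψ hψ (hK.of_isClosed_subset (isClosed_tsupport ψ) hψK) (hψK.trans hrU) hψ0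
  have hclose := setIntegral_mul_sub_fderiv_le_add hK (hg.mono_set hrU) (hG.mono_set hrU) hφ hφK
    (hψ.of_le (by exact_mod_cast le_top)) hψK hψφ hdψφ
  have hNε : ε / (N + 1) * N ≤ ε := by
    rw [div_mul_eq_mul_div, div_le_iff₀ (by positivity)]
    nlinarith
  rw [setIntegral_mul_sub_fderiv_eq hU.measurableSet hrU hψK] at hpos
  rw [setIntegral_mul_sub_fderiv_eq hU.measurableSet hrU hφK]
  exact hpos.trans (hclose.trans (by gcongr))

end TestFunctions

section WeakSolution

lemma measurable_gradient {E : Type*} [NormedAddCommGroup E] [InnerProductSpace ℝ E]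
    [CompleteSpace E] [MeasurableSpace E] [BorelSpace E] (v : E → ℝ) : Measurable (gradient v) :=
  (InnerProductSpace.toDual ℝ E).symm.continuous.measurable.comp (measurable_fderiv ℝ v)

lemma continuousOn_gradient {E : Type*} [NormedAddCommGroup E] [InnerProductSpace ℝ E]
    [CompleteSpace E] {v : E → ℝ} {U : Set E} (hv : ContDiffOn ℝ 1 v U) (hU : IsOpen U) :
    ContinuousOn (gradient v) U :=
  (InnerProductSpace.toDual ℝ E).symm.continuous.comp_continuousOn
    (hv.continuousOn_fderiv_of_isOpen hU le_rfl)

variable {n : ℕ} {A : Euc n → Euc n → Euc n} {b a v : Euc n → ℝ} {p C₁ C₂ α : ℝ}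
  {U : Set (Euc n)}

lemma LocBdd.locallyIntegrable (hb : LocBdd b) (hbm : Measurable b) (hb0 : ∀ x, 0 ≤ b x) :
    LocallyIntegrable b := by
  refine locallyIntegrable_iff.2 fun K hK ↦ ?_
  obtain ⟨C, hC⟩ := hb K hK
  refine Measure.integrableOn_of_bounded hK.measure_lt_top.ne hbm.aestronglyMeasurable (M := C) ?_
  filter_upwards [ae_restrict_mem hK.measurableSet] with x hx
  rw [Real.norm_of_nonneg (hb0 x)]
  exact hC x hx

lemma StructCond.locallyIntegrableOn (hA : StructCond A p C₁ C₂) (hp : 1 ≤ p) (hU : IsOpen U)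
    (hv : ContDiffOn ℝ 1 v U) : LocallyIntegrableOn (fun x ↦ A x (gradient v x)) U := by
  have hbound : ContinuousOn (fun x ↦ C₂ * ‖gradient v x‖ ^ (p - 1)) U :=
    continuousOn_const.mul <|
      (continuousOn_gradient hv hU).norm.rpow_const fun _ _ ↦ .inr (by linarith)
  refine (hbound.locallyIntegrableOn hU.measurableSet).mono ?_ <| .of_forall fun x ↦
    (hA.2 x (gradient v x)).2.trans (le_abs_self _)
  exact (hA.1.comp (measurable_id.prodMk (measurable_gradient v))).aestronglyMeasurable

lemma locallyIntegrableOn_mul_norm_gradient_rpow (hb : LocallyIntegrable b) (hU : IsOpen U)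
    (hv : ContDiffOn ℝ 1 v U) (hα : 0 ≤ α) :
    LocallyIntegrableOn (fun x ↦ b x * ‖gradient v x‖ ^ α) U :=
  (hb.locallyIntegrableOn U).mul_continuousOn
    ((continuousOn_gradient hv hU).norm.rpow_const fun _ _ ↦ .inr hα) hU.isLocallyClosed

lemma IsWeakSol.setIntegral_nonneg (hw : IsWeakSol A b α a U v) (hU : IsOpen U)
    (ha : LocallyIntegrableOn a U)
    (hb : LocallyIntegrableOn (fun x ↦ b x * ‖gradient v x‖ ^ α) U)
    (hA : LocallyIntegrableOn (fun x ↦ A x (gradient v x)) U) {φ : Euc n → ℝ}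
    (hφ : ContDiff ℝ 1 φ) (hc : HasCompactSupport φ) (hφU : tsupport φ ⊆ U)
    (hφ0 : ∀ x, 0 ≤ φ x) :
    0 ≤ ∫ x in U, ((b x * ‖gradient v x‖ ^ α - a x) * φ x -
      fderiv ℝ φ x (A x (gradient v x))) := by
  refine setIntegral_mul_sub_fderiv_nonneg_of_contDiff_one hU (hb.sub ha) hA
    (fun ψ hψ hψc hψU hψ0 ↦ ?_) hφ hc hφU hφ0
  have hψ1 : ContDiff ℝ 1 ψ := hψ.of_le (by exact_mod_cast le_top)
  have haψ := (integrable_mul_of_tsupport_subset ha hψ1.continuous hψc hψU).integrableOn (s := U)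
  have hbψ := (integrable_mul_of_tsupport_subset hb hψ1.continuous hψc hψU).integrableOn (s := U)
  have hAψ := (integrable_fderiv_apply_of_tsupport_subset hA hψ1 hψc hψU).integrableOn (s := U)
  have hweak := hw ψ hψ hψc hψU hψ0
  simp_rw [inner_gradient_right, RCLike.conj_to_real] at hweak
  have hbaψ : IntegrableOn (fun x ↦ b x * ‖gradient v x‖ ^ α * ψ x - a x * ψ x) U := hbψ.sub haψ
  simp_rw [sub_mul]
  rw [integral_sub hbaψ hAψ, integral_sub hbψ haψ]
  linarith

end WeakSolution

section Caccioppoli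

lemma mul_rpow_le_mul_rpow_add {c c₀ p α τ t : ℝ} (hα₁ : p - 1 ≤ α) (hα₂ : α ≤ p)
    (hp : 1 < p) (hτ : 0 < τ) (ht : 0 ≤ t) (hc : 0 ≤ c) (hcτ : c * τ ^ α ≤ c₀ * τ ^ p) :
    c * t ^ α ≤ c₀ * (t ^ p + τ * t ^ (p - 1)) := by
  have hs : 0 ≤ t / τ := by positivity
  have hmul_div (r : ℝ) : t ^ r = τ ^ r * (t / τ) ^ r := by
    rw [← Real.mul_rpow hτ.le hs, mul_div_cancel₀ _ hτ.ne']
  calc c * t ^ α = c * τ ^ α * (t / τ) ^ α := by rw [hmul_div, mul_assoc]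
    _ ≤ c * τ ^ α * ((t / τ) ^ (p - 1) + (t / τ) ^ p) := by
      gcongr
      exact rpow_le_rpow_add_rpow hs (by linarith) hα₁ hα₂
    _ ≤ c₀ * τ ^ p * ((t / τ) ^ (p - 1) + (t / τ) ^ p) := by gcongr
    _ = c₀ * (t ^ p + τ * t ^ (p - 1)) := by
      rw [hmul_div p, hmul_div (p - 1), ← mul_assoc τ, mul_comm τ, ← Real.rpow_add_one hτ.ne',
        sub_add_cancel]
      ring

/-- The constant in the Caccioppoli inequality, for cutoff functions whose gradient times the
oscillation of the solution is at most `ℓ` times the reference gradient `τ`. -/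
def caccioppoliConst (p C₁ C₂ ℓ : ℝ) : ℝ := (C₁ / 2) ^ (1 - p) * (p * ℓ * C₂ + C₁ / 2) ^ p

lemma caccioppoliConst_pos {p C₁ C₂ ℓ : ℝ} (hp : 0 ≤ p) (hC₁ : 0 < C₁) (hC₂ : 0 ≤ C₂)
    (hℓ : 0 ≤ ℓ) : 0 < caccioppoliConst p C₁ C₂ ℓ := by
  rw [caccioppoliConst]
  positivity

/-- Here `w`, `e`, `t` stand for the excess, the cutoff function and `|Dv|`, while `P` and `Q`
are the products of `A(x,Dv)` with the gradients of `v` and of the cutoff function. -/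
lemma caccioppoli_pointwise {p α C₁ C₂ ℓ τ b t w e P Q : ℝ} (hp : 1 < p) (hα₁ : p - 1 ≤ α)
    (hα₂ : α ≤ p) (hC₁ : 0 < C₁) (hC₂ : 0 ≤ C₂) (hℓ : 0 ≤ ℓ) (hτ : 0 < τ) (hb : 0 ≤ b)
    (ht : 0 ≤ t) (hw : 0 ≤ w) (he : 0 ≤ e) (he1 : e ≤ 1)
    (hbτ : w * b * τ ^ α ≤ C₁ / 2 * τ ^ p) (hP : C₁ * t ^ p ≤ P)
    (hQ : w * |Q| ≤ ℓ * τ * (C₂ * t ^ (p - 1))) :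
    b * t ^ α * (w ^ 2 * e ^ p) - (2 * w * e ^ p * P + w ^ 2 * (p * e ^ (p - 1) * Q)) ≤
      caccioppoliConst p C₁ C₂ ℓ * τ ^ p * w - C₁ * (w * (t * e) ^ p) := by
  have hep : e ^ p ≤ e ^ (p - 1) :=
    Real.rpow_le_rpow_of_exponent_ge' he he1 (by linarith) (by linarith)
  have hte (r : ℝ) : (t * e) ^ r = t ^ r * e ^ r := Real.mul_rpow ht he
  have hdrift : b * t ^ α * (w ^ 2 * e ^ p) ≤
      C₁ / 2 * (w * (t * e) ^ p) + C₁ / 2 * τ * (w * (t * e) ^ (p - 1)) := by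
    calc b * t ^ α * (w ^ 2 * e ^ p) = w * b * t ^ α * (w * e ^ p) := by ring
      _ ≤ C₁ / 2 * (t ^ p + τ * t ^ (p - 1)) * (w * e ^ p) := by
        refine mul_le_mul_of_nonneg_right ?_ (by positivity)
        exact mul_rpow_le_mul_rpow_add hα₁ hα₂ hp hτ ht (by positivity) hbτ
      _ = C₁ / 2 * (w * (t ^ p * e ^ p)) + C₁ / 2 * τ * (w * (t ^ (p - 1) * e ^ p)) := by ring
      _ ≤ _ := by rw [hte, hte]; gcongr
  have hcoercive : 2 * C₁ * (w * (t * e) ^ p) ≤ 2 * w * e ^ p * P := by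
    calc 2 * C₁ * (w * (t * e) ^ p) = 2 * w * e ^ p * (C₁ * t ^ p) := by rw [hte]; ring
      _ ≤ _ := by gcongr
  have hcutoff : -(w ^ 2 * (p * e ^ (p - 1) * Q)) ≤ p * ℓ * C₂ * τ * (w * (t * e) ^ (p - 1)) := by
    calc -(w ^ 2 * (p * e ^ (p - 1) * Q)) = p * w * e ^ (p - 1) * (w * -Q) := by ring
      _ ≤ p * w * e ^ (p - 1) * (ℓ * τ * (C₂ * t ^ (p - 1))) := by
        refine mul_le_mul_of_nonneg_left ?_ (by positivity)
        exact (mul_le_mul_of_nonneg_left (neg_le_abs Q) hw).trans hQ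
      _ = _ := by rw [hte]; ring
  have hyoung : (p * ℓ * C₂ + C₁ / 2) * τ * (w * (t * e) ^ (p - 1)) ≤
      C₁ / 2 * (w * (t * e) ^ p) + caccioppoliConst p C₁ C₂ ℓ * τ ^ p * w := by
    have h := mul_le_mul_of_nonneg_left (rpow_sub_one_mul_le_add hp (half_pos hC₁)
      (mul_nonneg ht he) (show 0 ≤ (p * ℓ * C₂ + C₁ / 2) * τ by positivity)) hw
    rw [Real.mul_rpow (z := p) (by positivity) hτ.le] at h
    rw [caccioppoliConst]
    linarith
  have : 0 ≤ C₁ * (w * (t * e) ^ p) := by positivity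
  linarith

section Rpow

variable {E : Type*} [NormedAddCommGroup E] [NormedSpace ℝ E] {η : E → ℝ} {K : Set E} {L p : ℝ}

lemma IsCutoff.contDiff_rpow (hη : IsCutoff η K L) (hp : 1 ≤ p) :
    ContDiff ℝ 1 fun x ↦ η x ^ p :=
  (Real.contDiff_rpow_const_of_le (n := 1) (by simpa using hp)).comp hη.contDiff

lemma IsCutoff.fderiv_rpow (hη : IsCutoff η K L) (hp : 1 ≤ p) (x : E) :
    fderiv ℝ (fun x ↦ η x ^ p) x = (p * η x ^ (p - 1)) • fderiv ℝ η x :=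
  ((hη.contDiff.differentiable one_ne_zero x).hasFDerivAt.rpow_const (.inr hp)).fderiv

lemma IsCutoff.tsupport_rpow_subset (hη : IsCutoff η K L) (hp : p ≠ 0) :
    tsupport (fun x ↦ η x ^ p) ⊆ K :=
  (closure_mono fun x hx ↦ mt (fun hηx ↦ by simp [hηx, hp]) hx).trans hη.tsupport_subset

lemma IsCutoff.tsupport_mul_rpow_subset (hη : IsCutoff η K L) (hp : p ≠ 0) (f : E → ℝ) :
    tsupport (fun x ↦ f x * η x ^ p) ⊆ K :=
  (tsupport_mul_subset_right (f := f)).trans (hη.tsupport_rpow_subset hp)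

end Rpow

variable {n : ℕ} {A : Euc n → Euc n → Euc n} {b a v : Euc n → ℝ} {p C₁ C₂ α : ℝ}
  {U : Set (Euc n)} {h k m τ ℓ L : ℝ} {η : Euc n → ℝ} {K : Set (Euc n)}

lemma StructCond.caccioppoli_integrand_le (hA : StructCond A p C₁ C₂) (hp : 1 < p)
    (hα₁ : p - 1 ≤ α) (hα₂ : α ≤ p) (hC₁ : 0 < C₁) (hC₂ : 0 ≤ C₂) (hτ : 0 < τ) (hm : 0 ≤ m)
    (hℓ : 0 ≤ ℓ) (hmL : m * L ≤ ℓ * τ) (hη : IsCutoff η K L) {x : Euc n} (hb : 0 ≤ b x)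
    (hbτ : m * b x * τ ^ α ≤ C₁ / 2 * τ ^ p) (hv : DifferentiableAt ℝ v x)
    (hvx : v x ≤ k + m) (hah : k < v x → h ≤ a x) :
    (b x * ‖gradient v x‖ ^ α - a x) * (excess v k x ^ 2 * η x ^ p) -
        fderiv ℝ (fun x ↦ excess v k x ^ 2 * η x ^ p) x (A x (gradient v x)) ≤
      caccioppoliConst p C₁ C₂ ℓ * τ ^ p * excess v k x -
        C₁ * (excess v k x * (‖gradient v x‖ * η x) ^ p) -
        h * (excess v k x ^ 2 * η x ^ p) := by
  set w := excess v k x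
  set V := A x (gradient v x)
  have hw0 : 0 ≤ w := excess_nonneg v k x
  have hwm : w ≤ m := excess_le hm hvx
  have hη0 : 0 ≤ η x := hη.nonneg x
  have ha : h * (w ^ 2 * η x ^ p) ≤ a x * (w ^ 2 * η x ^ p) := by
    rcases le_or_gt (v x) k with hxk | hxk
    · simp [w, excess_eq_zero hxk]
    · gcongr
      exact hah hxk
  have hV : ‖V‖ ≤ C₂ * ‖gradient v x‖ ^ (p - 1) := (hA.2 x _).2
  have hQ : w * |fderiv ℝ η x V| ≤ ℓ * τ * (C₂ * ‖gradient v x‖ ^ (p - 1)) := by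
    have : 0 ≤ L := (norm_nonneg _).trans (hη.norm_fderiv_le x)
    calc w * |fderiv ℝ η x V| ≤ m * (L * ‖V‖) := by
          gcongr
          exact (fderiv ℝ η x).le_of_opNorm_le (hη.norm_fderiv_le x) V
      _ = m * L * ‖V‖ := by ring
      _ ≤ _ := by gcongr
  have hmain := caccioppoli_pointwise hp hα₁ hα₂ hC₁ hC₂ hℓ hτ hb (norm_nonneg (gradient v x))
    hw0 hη0 (hη.le_one x) (le_trans (by gcongr) hbτ) (hA.2 x _).1 hQ
  rw [inner_gradient_left] at hmain
  rw [fderiv_excess_sq_mul hv ((hη.contDiff_rpow hp.le).differentiable one_ne_zero x) k,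
    hη.fderiv_rpow hp.le]
  simp only [add_apply, smul_apply, smul_eq_mul]
  linarith

theorem IsWeakSol.caccioppoli (hw : IsWeakSol A b α a U v) (hA : StructCond A p C₁ C₂)
    (hp : 1 < p) (hα₁ : p - 1 ≤ α) (hα₂ : α ≤ p) (hC₁ : 0 < C₁) (hC₂ : 0 ≤ C₂) (hU : IsOpen U)
    (hv : ContDiffOn ℝ 1 v U) (hb0 : ∀ x, 0 ≤ b x) (hb : LocallyIntegrable b)
    (ha : LocallyIntegrableOn a U) (hah : ∀ x ∈ U, k < v x → h ≤ a x)
    (hτ : 0 < τ) (hm : 0 ≤ m) (hℓ : 0 ≤ ℓ) (hmL : m * L ≤ ℓ * τ)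
    (hbτ : ∀ᵐ x ∂volume.restrict U, m * b x * τ ^ α ≤ C₁ / 2 * τ ^ p)
    (hη : IsCutoff η K L) (hK : IsCompact K) (hKU : K ⊆ U) (hvK : ∀ x ∈ K, v x ≤ k + m) :
    C₁ * (∫ x in K, excess v k x * (‖gradient v x‖ * η x) ^ p) +
        h * (∫ x in K, excess v k x ^ 2 * η x ^ p) ≤
      caccioppoliConst p C₁ C₂ ℓ * τ ^ p * ∫ x in K, excess v k x := by
  have hp0 : p ≠ 0 := by linarith
  have hDv : ContinuousOn (fun x ↦ ‖gradient v x‖) K :=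
    (continuousOn_gradient hv hU).norm.mono hKU
  have hw_cont : ContinuousOn (excess v k) K := continuousOn_excess (hv.continuousOn.mono hKU) k
  have hη_cont : ContinuousOn η K := hη.contDiff.continuous.continuousOn
  have hφ := contDiff_excess_sq_mul hU hv (hη.contDiff_rpow hp.le)
    ((hη.tsupport_rpow_subset hp0).trans hKU) k
  have hφK := hη.tsupport_mul_rpow_subset hp0 fun x ↦ excess v k x ^ 2
  have hφc : HasCompactSupport fun x ↦ excess v k x ^ 2 * η x ^ p :=
    hK.of_isClosed_subset (isClosed_tsupport _) hφK
  have hbU := locallyIntegrableOn_mul_norm_gradient_rpow hb hU hv (show 0 ≤ α by linarith)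
  have hAU := hA.locallyIntegrableOn hp.le hU hv
  have hweak := hw.setIntegral_nonneg hU ha hbU hAU hφ hφc (hφK.trans hKU) fun x ↦
    mul_nonneg (sq_nonneg _) (Real.rpow_nonneg (hη.nonneg x) p)
  rw [setIntegral_mul_sub_fderiv_eq hU.measurableSet hKU hφK] at hweak
  have henergy : IntegrableOn (fun x ↦ excess v k x * (‖gradient v x‖ * η x) ^ p) K :=
    (hw_cont.mul ((hDv.mul hη_cont).rpow_const
      fun _ _ ↦ .inr (by linarith))).integrableOn_compact hK
  have hsource : IntegrableOn (fun x ↦ excess v k x ^ 2 * η x ^ p) K :=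
    ((hw_cont.pow 2).mul (hη_cont.rpow_const fun _ _ ↦ .inr (by linarith))).integrableOn_compact hK
  have hw_int := (hw_cont.integrableOn_compact hK (μ := volume)).const_mul
    (caccioppoliConst p C₁ C₂ ℓ * τ ^ p)
  have hle := setIntegral_mono_ae_restrict
    (integrable_mul_sub_fderiv_of_tsupport_subset (hbU.sub ha) hAU hφ hφc
      (hφK.trans hKU)).integrableOn ((hw_int.sub (henergy.const_mul C₁)).sub (hsource.const_mul h))
    (by
      filter_upwards [ae_restrict_of_ae_restrict_of_subset hKU hbτ,
        ae_restrict_mem hK.measurableSet] with x hbx hx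
      exact hA.caccioppoli_integrand_le hp hα₁ hα₂ hC₁ hC₂ hτ hm hℓ hmL hη (hb0 x) hbx
        ((hv.contDiffAt (hU.mem_nhds (hKU hx))).differentiableAt one_ne_zero) (hvK x hx)
        (hah x (hKU hx)))
  have hbound := hweak.trans hle
  rw [integral_sub' (hw_int.sub (henergy.const_mul C₁)) (hsource.const_mul h),
    integral_sub' hw_int (henergy.const_mul C₁), integral_const_mul, integral_const_mul,
    integral_const_mul] at hbound
  linarith

end Caccioppoli

section DeGiorgi

lemma integrable_norm_rpow_of_hasCompactSupport {E F : Type*} [TopologicalSpace E]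
    [MeasurableSpace E] [OpensMeasurableSpace E] {μ : Measure E} [IsFiniteMeasureOnCompacts μ]
    [NormedAddCommGroup F] {q : ℝ} (hq : 0 < q) {u : E → F} (hu : Continuous u)
    (hc : HasCompactSupport u) : Integrable (fun x ↦ ‖u x‖ ^ q) μ :=
  (hu.norm.rpow_const fun _ ↦ .inr hq.le).integrable_of_hasCompactSupport
    (hc.norm.comp_left (g := fun y : ℝ ↦ y ^ q) (Real.zero_rpow hq.ne'))

variable {E : Type*} [NormedAddCommGroup E] [NormedSpace ℝ E] {v η : E → ℝ} {U B B' : Set E}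
  {p q K τ m L ℓ k d σ : ℝ}

lemma norm_fderiv_excess_sq_mul_sq_le (hp : 1 ≤ p) (hτ : 0 < τ) (hm : 0 ≤ m)
    (hmL : m * L ≤ ℓ * τ) (hη : IsCutoff η B L) {x : E} (hv : DifferentiableAt ℝ v x)
    (hvx : v x ≤ k + m) :
    ‖fderiv ℝ (fun x ↦ excess v k x ^ 2 * η x ^ (2 : ℝ)) x‖ ≤
      2 * τ ^ (1 - p) * (excess v k x * (‖fderiv ℝ v x‖ * η x) ^ p) +
        2 * (1 + ℓ) * τ * excess v k x := by
  set w := excess v k x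
  set t := ‖fderiv ℝ v x‖ * η x
  have hw0 : 0 ≤ w := excess_nonneg v k x
  have hwm : w ≤ m := excess_le hm hvx
  have hη0 : 0 ≤ η x := hη.nonneg x
  have hη1 : η x ≤ 1 := hη.le_one x
  have hL : 0 ≤ L := (norm_nonneg _).trans (hη.norm_fderiv_le x)
  have ht : t ≤ τ ^ (1 - p) * t ^ p + τ := by
    have h := rpow_le_rpow_add_rpow (show 0 ≤ t / τ by positivity) le_rfl zero_le_one hp
    rw [Real.rpow_one, Real.rpow_zero, Real.div_rpow (by positivity) hτ.le, div_le_iff₀ hτ] at h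
    rw [Real.rpow_sub hτ, Real.rpow_one]
    exact h.trans_eq (by ring)
  have hDv : ‖(2 * w * η x ^ 2) • fderiv ℝ v x‖ ≤ 2 * w * t := by
    rw [norm_smul, Real.norm_of_nonneg (by positivity)]
    calc 2 * w * η x ^ 2 * ‖fderiv ℝ v x‖ = 2 * w * t * η x := by ring
      _ ≤ 2 * w * t := mul_le_of_le_one_right (by positivity) hη1
  have hDη : ‖(w ^ 2 * (2 * η x)) • fderiv ℝ η x‖ ≤ 2 * w * (ℓ * τ) := by
    rw [norm_smul, Real.norm_of_nonneg (by positivity)]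
    calc w ^ 2 * (2 * η x) * ‖fderiv ℝ η x‖ ≤ w ^ 2 * (2 * 1) * L := by
          gcongr
          exact hη.norm_fderiv_le x
      _ = 2 * w * (w * L) := by ring
      _ ≤ 2 * w * (m * L) := by gcongr
      _ ≤ 2 * w * (ℓ * τ) := by gcongr
  rw [fderiv_excess_sq_mul hv ((hη.contDiff_rpow one_le_two).differentiable one_ne_zero x) k,
    hη.fderiv_rpow one_le_two, smul_smul, Real.rpow_two, show (2 : ℝ) - 1 = 1 by norm_num,
    Real.rpow_one]
  calc _ ≤ 2 * w * t + 2 * w * (ℓ * τ) := norm_add_le_of_le hDv hDη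
    _ ≤ 2 * w * (τ ^ (1 - p) * t ^ p + τ) + 2 * w * (ℓ * τ) := by gcongr
    _ = _ := by ring

variable [MeasurableSpace E] {μ : Measure E}

/-- The De Giorgi class: `C¹` functions on `U` whose excess over every nonnegative level satisfies
a Caccioppoli inequality. Here `τ` is a reference size of the gradient; the inequality is required
where the excess is at most `m`, for cutoff functions with gradient at most `L`. -/
structure DeGiorgiClass (μ : Measure E) (v : E → ℝ) (U : Set E) (p K τ m L : ℝ) : Prop where
  isOpen : IsOpen U
  contDiffOn : ContDiffOn ℝ 1 v U
  setIntegral_le : ∀ (k : ℝ) (η : E → ℝ) (B : Set E), 0 ≤ k → IsCompact B → B ⊆ U →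
    IsCutoff η B L → (∀ x ∈ B, v x ≤ k + m) →
    ∫ x in B, excess v k x * (‖fderiv ℝ v x‖ * η x) ^ p ∂μ ≤
      K * τ ^ p * ∫ x in B, excess v k x ∂μ

lemma DeGiorgiClass.contDiff_excess_sq_mul_sq (hv : DeGiorgiClass μ v U p K τ m L)
    (hBU : B ⊆ U) (hη : IsCutoff η B L) (k : ℝ) :
    ContDiff ℝ 1 fun x ↦ excess v k x ^ 2 * η x ^ (2 : ℝ) :=
  contDiff_excess_sq_mul hv.isOpen hv.contDiffOn (hη.contDiff_rpow one_le_two)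
    ((hη.tsupport_rpow_subset two_ne_zero).trans hBU) k

variable [BorelSpace E]

lemma DeGiorgiClass.integrableOn_excess [IsFiniteMeasureOnCompacts μ]
    (hv : DeGiorgiClass μ v U p K τ m L) (hB : IsCompact B) (hBU : B ⊆ U) (k : ℝ) :
    IntegrableOn (excess v k) B μ :=
  (continuousOn_excess (hv.contDiffOn.continuousOn.mono hBU) k).integrableOn_compact hB

lemma DeGiorgiClass.integral_norm_fderiv_le [IsFiniteMeasureOnCompacts μ]
    (hv : DeGiorgiClass μ v U p K τ m L) (hp : 1 ≤ p) (hτ : 0 < τ) (hm : 0 ≤ m)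
    (hmL : m * L ≤ ℓ * τ) (hk : 0 ≤ k) (hB : IsCompact B) (hBU : B ⊆ U) (hη : IsCutoff η B L)
    (hvB : ∀ x ∈ B, v x ≤ k + m) :
    ∫ x, ‖fderiv ℝ (fun x ↦ excess v k x ^ 2 * η x ^ (2 : ℝ)) x‖ ∂μ ≤
      2 * (K + 1 + ℓ) * τ * ∫ x in B, excess v k x ∂μ := by
  set u : E → ℝ := fun x ↦ excess v k x ^ 2 * η x ^ (2 : ℝ)
  have huB : tsupport u ⊆ B := hη.tsupport_mul_rpow_subset two_ne_zero _
  have hu : ContDiff ℝ 1 u := hv.contDiff_excess_sq_mul_sq hBU hη k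
  have huc : HasCompactSupport u := hB.of_isClosed_subset (isClosed_tsupport u) huB
  have hDu : Integrable (fun x ↦ ‖fderiv ℝ u x‖) μ :=
    ((hu.continuous_fderiv one_ne_zero).integrable_of_hasCompactSupport (huc.fderiv ℝ)).norm
  have hDv : ContinuousOn (fun x ↦ ‖fderiv ℝ v x‖) B :=
    (hv.contDiffOn.continuousOn_fderiv_of_isOpen hv.isOpen le_rfl).norm.mono hBU
  have henergy : IntegrableOn (fun x ↦ excess v k x * (‖fderiv ℝ v x‖ * η x) ^ p) B μ :=
    ((continuousOn_excess (hv.contDiffOn.continuousOn.mono hBU) k).mul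
      ((hDv.mul hη.contDiff.continuous.continuousOn).rpow_const
        fun _ _ ↦ .inr (by linarith))).integrableOn_compact hB
  have hw := hv.integrableOn_excess hB hBU k
  have hτp : τ ^ (1 - p) * τ ^ p = τ := by
    rw [← Real.rpow_add hτ, sub_add_cancel, Real.rpow_one]
  calc ∫ x, ‖fderiv ℝ u x‖ ∂μ = ∫ x in B, ‖fderiv ℝ u x‖ ∂μ := by
        refine (setIntegral_eq_integral_of_forall_compl_eq_zero fun x hx ↦ norm_eq_zero.2 ?_).symm
        exact Function.notMem_support.1 fun h ↦ hx (huB (support_fderiv_subset ℝ h))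
    _ ≤ ∫ x in B, (2 * τ ^ (1 - p) * (excess v k x * (‖fderiv ℝ v x‖ * η x) ^ p) +
          2 * (1 + ℓ) * τ * excess v k x) ∂μ := by
        refine setIntegral_mono_on hDu.integrableOn ((henergy.const_mul _).add (hw.const_mul _))
          hB.measurableSet fun x hx ↦ ?_
        exact norm_fderiv_excess_sq_mul_sq_le hp hτ hm hmL hη
          ((hv.contDiffOn.contDiffAt (hv.isOpen.mem_nhds (hBU hx))).differentiableAt one_ne_zero)
          (hvB x hx)
    _ ≤ 2 * τ ^ (1 - p) * (K * τ ^ p * ∫ x in B, excess v k x ∂μ) +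
          2 * (1 + ℓ) * τ * ∫ x in B, excess v k x ∂μ := by
        rw [integral_add (henergy.const_mul _) (hw.const_mul _), integral_const_mul,
          integral_const_mul]
        gcongr
        exact hv.setIntegral_le k η B hk hB hBU hη hvB
    _ = (2 * K * (τ ^ (1 - p) * τ ^ p) + 2 * (1 + ℓ) * τ) * ∫ x in B, excess v k x ∂μ := by ring
    _ = _ := by rw [hτp]; ring

variable [FiniteDimensional ℝ E] [μ.IsAddHaarMeasure]

lemma integral_norm_rpow_le_integral_norm_fderiv_rpow {F : Type*} [NormedAddCommGroup F]
    [NormedSpace ℝ F] (hq : Real.HolderConjugate (Module.finrank ℝ E) q) {u : E → F}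
    (hu : ContDiff ℝ 1 u) (hc : HasCompactSupport u) :
    ∫ x, ‖u x‖ ^ q ∂μ ≤
      lintegralPowLePowLIntegralFDerivConst μ q * (∫ x, ‖fderiv ℝ u x‖ ∂μ) ^ q := by
  have hq0 : 0 ≤ q := hq.symm.nonneg
  have hDu : Integrable (fderiv ℝ u) μ :=
    (hu.continuous_fderiv one_ne_zero).integrable_of_hasCompactSupport (hc.fderiv ℝ)
  have hDu0 : 0 ≤ ∫ x, ‖fderiv ℝ u x‖ ∂μ := by positivity
  rw [← ENNReal.ofReal_le_ofReal_iff (by positivity), ENNReal.ofReal_mul (by positivity),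
    ENNReal.ofReal_coe_nnreal, ← ENNReal.ofReal_rpow_of_nonneg hDu0 hq0,
    ofReal_integral_norm_eq_lintegral_enorm hDu,
    ofReal_integral_eq_lintegral_ofReal
      (integrable_norm_rpow_of_hasCompactSupport hq.symm.pos hu.continuous hc)
      (.of_forall fun x ↦ by positivity)]
  simp_rw [← ENNReal.ofReal_rpow_of_nonneg (norm_nonneg _) hq0, ofReal_norm]
  exact lintegral_pow_le_pow_lintegral_fderiv μ hu hc hq

/-- The Sobolev inequality for `excess² η²`, whose `q`-th power dominates the excess over the
higher level. -/
lemma DeGiorgiClass.setIntegral_excess_add_le (hv : DeGiorgiClass μ v U p K τ m L)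
    (hq : Real.HolderConjugate (Module.finrank ℝ E) q) (hp : 1 ≤ p) (hτ : 0 < τ) (hm : 0 ≤ m)
    (hmL : m * L ≤ ℓ * τ) (hk : 0 ≤ k) (hB : IsCompact B) (hBU : B ⊆ U) (hη : IsCutoff η B L)
    (hvB : ∀ x ∈ B, v x ≤ k + m) (hB' : IsCompact B') (hB'B : B' ⊆ B) (hσ : 0 ≤ σ)
    (hση : ∀ x ∈ B', σ ≤ η x) (hd : 0 < d) :
    σ ^ (2 * q) * d ^ (2 * q - 1) * (∫ x in B', excess v (k + d) x ∂μ) ≤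
      lintegralPowLePowLIntegralFDerivConst μ q *
        (2 * (K + 1 + ℓ) * τ * ∫ x in B, excess v k x ∂μ) ^ q := by
  have hq1 : 1 < q := hq.symm.lt
  set u : E → ℝ := fun x ↦ excess v k x ^ 2 * η x ^ (2 : ℝ)
  have hu : ContDiff ℝ 1 u := hv.contDiff_excess_sq_mul_sq hBU hη k
  have huc : HasCompactSupport u :=
    hB.of_isClosed_subset (isClosed_tsupport u) (hη.tsupport_mul_rpow_subset two_ne_zero _)
  have huq := integrable_norm_rpow_of_hasCompactSupport (μ := μ) hq.symm.pos hu.continuous huc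
  have hpointwise : ∀ x ∈ B', σ ^ (2 * q) * d ^ (2 * q - 1) * excess v (k + d) x ≤ ‖u x‖ ^ q := by
    intro x hx
    have hw := excess_nonneg v k x
    have hη0 := hη.nonneg x
    have hη_ge := hση x hx
    have hlevel := rpow_sub_one_mul_max_sub_le_rpow hd (show 1 ≤ 2 * q by linarith) hw
    rw [Real.norm_of_nonneg (by positivity), Real.mul_rpow (by positivity) (by positivity),
      ← Real.rpow_two, ← Real.rpow_mul hw, ← Real.rpow_mul hη0, excess_add hd.le, mul_assoc,
      mul_comm (excess v k x ^ (2 * q))]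
    gcongr
  calc σ ^ (2 * q) * d ^ (2 * q - 1) * (∫ x in B', excess v (k + d) x ∂μ)
      ≤ ∫ x in B', ‖u x‖ ^ q ∂μ := by
        rw [← integral_const_mul]
        exact setIntegral_mono_on ((hv.integrableOn_excess hB' (hB'B.trans hBU) _).const_mul _)
          huq.integrableOn hB'.measurableSet hpointwise
    _ ≤ ∫ x, ‖u x‖ ^ q ∂μ := setIntegral_le_integral huq (.of_forall fun x ↦ by positivity)
    _ ≤ _ := integral_norm_rpow_le_integral_norm_fderiv_rpow hq hu huc
    _ ≤ _ := by
        have := hv.integral_norm_fderiv_le hp hτ hm hmL hk hB hBU hη hvB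
        gcongr

end DeGiorgi

section DeGiorgiIteration

lemma dyadic_rpow_mul_rpow {d : ℝ} (hd : 0 ≤ d) (q : ℝ) (j : ℕ) :
    (((1 / 2 : ℝ) ^ (j + 2)) ^ 2) ^ (2 * q) * (d * (1 / 2) ^ (j + 1)) ^ (2 * q - 1) =
      d ^ (2 * q - 1) / (2 ^ (10 * q - 1) * (2 ^ (6 * q - 1)) ^ j) := by
  have hhalf (i : ℕ) : (1 / 2 : ℝ) ^ i = 2 ^ (-i : ℝ) := by
    rw [Real.rpow_neg zero_le_two, Real.rpow_natCast, one_div, inv_pow]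
  rw [Real.mul_rpow hd (by positivity), ← pow_mul, hhalf, hhalf, div_eq_mul_inv,
    ← Real.rpow_natCast _ j, ← Real.rpow_mul zero_le_two, ← Real.rpow_mul zero_le_two,
    ← Real.rpow_mul zero_le_two, ← Real.rpow_add zero_lt_two, ← Real.rpow_neg zero_le_two,
    mul_left_comm, ← Real.rpow_add zero_lt_two]
  push_cast
  ring_nf

variable {E : Type*} [NormedAddCommGroup E] [MeasurableSpace E] {μ : Measure E} {v : E → ℝ}
  {U : Set E} {y : E} {p q K τ m ℓ k d r R : ℝ}

lemma le_of_setIntegral_excess_nonpos [NormedSpace ℝ E] [FiniteDimensional ℝ E] [BorelSpace E]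
    [μ.IsOpenPosMeasure] [IsFiniteMeasureOnCompacts μ] (hr : 0 < r)
    (hv : ContinuousOn v (closedBall y r))
    (hint : ∫ x in closedBall y r, excess v k x ∂μ ≤ 0) : v y ≤ k := by
  by_contra! hky
  refine hint.not_gt ?_
  rw [setIntegral_pos_iff_support_of_nonneg_ae (.of_forall fun x ↦ excess_nonneg v k x)
    ((continuousOn_excess hv k).integrableOn_compact (isCompact_closedBall y r))]
  refine Measure.measure_pos_of_mem_nhds μ (x := y) ?_
  have hball : closedBall y r ∈ nhds y := closedBall_mem_nhds y hr
  filter_upwards [(hv.continuousAt hball).eventually_const_lt hky, hball] with x hkx hx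
  exact ⟨((sub_pos.2 hkx).trans_le (le_max_left _ _)).ne', hx⟩

/-- The excess in the `j`-th step of the De Giorgi iteration, in which the levels increase from
`k` to `k + d` and the radii decrease from `R / 2` to `R / 4`. -/
def dyadicExcess (μ : Measure E) (v : E → ℝ) (y : E) (R k d : ℝ) (j : ℕ) : ℝ :=
  ∫ x in closedBall y (R / 4 * (1 + (1 / 2) ^ j)), excess v (k + d * (1 - (1 / 2) ^ j)) x ∂μ

lemma dyadicExcess_nonneg (μ : Measure E) (v : E → ℝ) (y : E) (R k d : ℝ) (j : ℕ) :
    0 ≤ dyadicExcess μ v y R k d j :=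
  integral_nonneg fun x ↦ excess_nonneg v _ x

lemma dyadicExcess_zero (μ : Measure E) (v : E → ℝ) (y : E) (R k d : ℝ) :
    dyadicExcess μ v y R k d 0 = ∫ x in closedBall y (R / 2), excess v k x ∂μ := by
  rw [dyadicExcess, pow_zero, sub_self, mul_zero, add_zero,
    show R / 4 * (1 + 1) = R / 2 by ring]

lemma dyadic_radius_le (hR : 0 ≤ R) (j : ℕ) : R / 4 * (1 + (1 / 2) ^ j) ≤ R / 2 := by
  have : (1 / 2 : ℝ) ^ j ≤ 1 := pow_le_one₀ (by norm_num) (by norm_num)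
  nlinarith

variable [BorelSpace E]

lemma setIntegral_excess_le_dyadicExcess [NormedSpace ℝ E] [FiniteDimensional ℝ E]
    [IsFiniteMeasureOnCompacts μ] (hR : 0 ≤ R) (hd : 0 ≤ d)
    (hv : ContinuousOn v (closedBall y (R / 2))) (k : ℝ) (j : ℕ) :
    ∫ x in closedBall y (R / 4), excess v (k + d) x ∂μ ≤ dyadicExcess μ v y R k d j := by
  have hsmall : closedBall y (R / 4) ⊆ closedBall y (R / 4 * (1 + (1 / 2) ^ j)) :=
    closedBall_subset_closedBall (le_mul_of_one_le_right (by positivity) (by simp))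
  have hbig : closedBall y (R / 4 * (1 + (1 / 2) ^ j)) ⊆ closedBall y (R / 2) :=
    closedBall_subset_closedBall (dyadic_radius_le hR j)
  have hint (k' : ℝ) : IntegrableOn (excess v k') (closedBall y (R / 4 * (1 + (1 / 2) ^ j))) μ :=
    (continuousOn_excess (hv.mono hbig) k').integrableOn_compact (isCompact_closedBall _ _)
  calc ∫ x in closedBall y (R / 4), excess v (k + d) x ∂μ
      ≤ ∫ x in closedBall y (R / 4 * (1 + (1 / 2) ^ j)), excess v (k + d) x ∂μ :=
        setIntegral_mono_set (hint _) (.of_forall fun x ↦ excess_nonneg v _ x) hsmall.eventuallyLE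
    _ ≤ dyadicExcess μ v y R k d j := by
        refine integral_mono (hint _) (hint _) fun x ↦ excess_anti ?_ v x
        have : 0 ≤ d * (1 / 2) ^ j := by positivity
        linarith

variable [InnerProductSpace ℝ E] [FiniteDimensional ℝ E] [μ.IsAddHaarMeasure]

lemma DeGiorgiClass.dyadicExcess_succ_le (hv : DeGiorgiClass μ v U p K τ m (16 / R))
    (hq : Real.HolderConjugate (Module.finrank ℝ E) q) (hp : 1 ≤ p) (hτ : 0 < τ) (hm : 0 ≤ m)
    (hmL : m * (16 / R) ≤ ℓ * τ) (hk : 0 ≤ k) (hR : 0 < R) (hBU : closedBall y (R / 2) ⊆ U)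
    (hvB : ∀ x ∈ closedBall y (R / 2), v x ≤ k + m) (hd : 0 < d) (j : ℕ) :
    d ^ (2 * q - 1) / (2 ^ (10 * q - 1) * (2 ^ (6 * q - 1)) ^ j) *
        dyadicExcess μ v y R k d (j + 1) ≤
      lintegralPowLePowLIntegralFDerivConst μ q *
        (2 * (K + 1 + ℓ) * τ * dyadicExcess μ v y R k d j) ^ q := by
  set s : ℝ := (1 / 2) ^ j
  have : 0 < s := by positivity
  have hs1 : s ≤ 1 := pow_le_one₀ (by norm_num) (by norm_num)
  set ρ := R / 4 * (1 + s) with hρ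
  set ρ' := R / 4 * (1 + (1 / 2) ^ (j + 1))
  have hρ0 : 0 < ρ := by positivity
  have hρρ' : ρ - ρ' = R / 4 * (s / 2) := by simp only [ρ, ρ', s]; ring
  have hρ'ρ : ρ' ≤ ρ := by linarith [show 0 ≤ R / 4 * (s / 2) by positivity]
  have hη : IsCutoff (quadCutoff y ρ) (closedBall y ρ) (16 / R) := by
    refine (isCutoff_quadCutoff y hρ0).mono_right ?_
    rw [div_le_div_iff₀ hρ0 hR, hρ]
    linarith [show 0 ≤ R * s by positivity]
  have hηge : ∀ x ∈ closedBall y ρ', ((1 / 2) ^ (j + 2)) ^ 2 ≤ quadCutoff y ρ x := by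
    refine fun x hx ↦ le_trans ?_ (sq_div_le_quadCutoff hρ0 hρ'ρ hx)
    gcongr
    rw [hρρ', le_div_iff₀ hρ0]
    calc (1 / 2) ^ (j + 2) * ρ = R / 4 * (s / 2) * ((1 + s) / 2) := by simp only [ρ, s]; ring
      _ ≤ R / 4 * (s / 2) := mul_le_of_le_one_right (by positivity) (by linarith)
  have hsub : closedBall y ρ ⊆ closedBall y (R / 2) :=
    closedBall_subset_closedBall (dyadic_radius_le hR.le j)
  have hds : 0 ≤ d * (1 - s) := mul_nonneg hd.le (sub_nonneg.2 hs1)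
  have hstep := hv.setIntegral_excess_add_le (k := k + d * (1 - s)) (d := d * (1 / 2) ^ (j + 1))
    hq hp hτ hm hmL (by linarith) (isCompact_closedBall y ρ) (hsub.trans hBU) hη
    (fun x hx ↦ (hvB x (hsub hx)).trans (by linarith)) (isCompact_closedBall y ρ')
    (closedBall_subset_closedBall hρ'ρ) (by positivity) hηge (by positivity)
  rw [dyadic_rpow_mul_rpow hd.le, show k + d * (1 - s) + d * (1 / 2) ^ (j + 1) =
    k + d * (1 - (1 / 2) ^ (j + 1)) by simp only [s]; ring] at hstep
  exact hstep

theorem DeGiorgiClass.le_add_of_setIntegral_excess_le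
    (hv : DeGiorgiClass μ v U p K τ m (16 / R))
    (hq : Real.HolderConjugate (Module.finrank ℝ E) q) (hp : 1 ≤ p) (hτ : 0 < τ) (hm : 0 ≤ m)
    (hmL : m * (16 / R) ≤ ℓ * τ) (hK : 0 ≤ K + 1 + ℓ) (hk : 0 ≤ k) (hR : 0 < R)
    (hBU : closedBall y (R / 2) ⊆ U) (hvB : ∀ x ∈ closedBall y (R / 2), v x ≤ k + m) (hd : 0 < d)
    (hsmall : lintegralPowLePowLIntegralFDerivConst μ q * 2 ^ (10 * q - 1) *
        (2 * (K + 1 + ℓ)) ^ q * (τ ^ q * d ^ (1 - 2 * q)) *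
        (∫ x in closedBall y (R / 2), excess v k x ∂μ) ^ (q - 1) ≤
      (2 ^ (6 * q - 1)) ^ (-(q - 1)⁻¹)) :
    v y ≤ k + d := by
  have hq1 : 1 < q := hq.symm.lt
  have hv_cont : ContinuousOn v (closedBall y (R / 2)) := hv.contDiffOn.continuousOn.mono hBU
  have htendsto : Tendsto (dyadicExcess μ v y R k d) atTop (nhds 0) := by
    refine tendsto_zero_of_succ_le_mul_pow_mul_rpow (B := 2 ^ (6 * q - 1))
      (M := lintegralPowLePowLIntegralFDerivConst μ q * 2 ^ (10 * q - 1) *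
        (2 * (K + 1 + ℓ)) ^ q * (τ ^ q * d ^ (1 - 2 * q))) (by positivity)
      (Real.one_lt_rpow one_lt_two (by linarith)) hq1 (dyadicExcess_nonneg μ v y R k d)
      (fun j ↦ ?_) (by rwa [dyadicExcess_zero])
    have hz := dyadicExcess_nonneg μ v y R k d j
    have hstep := hv.dyadicExcess_succ_le hq hp hτ hm hmL hk hR hBU hvB hd j
    rw [div_mul_eq_mul_div, div_le_iff₀ (by positivity), ← le_div_iff₀' (by positivity),
      Real.mul_rpow (by positivity) hz, Real.mul_rpow (by positivity) hτ.le] at hstep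
    refine hstep.trans_eq ?_
    rw [← neg_sub (2 * q) 1, Real.rpow_neg hd.le]
    ring
  have hle : ∫ x in closedBall y (R / 4), excess v (k + d) x ∂μ ≤ 0 :=
    ge_of_tendsto' htendsto fun j ↦ setIntegral_excess_le_dyadicExcess hR.le hd.le hv_cont k j
  exact le_of_setIntegral_excess_nonpos (by positivity)
    (hv_cont.mono (closedBall_subset_closedBall (by linarith))) hle

end DeGiorgiIteration

section ScaledDeGiorgi

lemma exists_pos_mul_rpow_le {s T : ℝ} (hs : 0 < s) (hT : 0 < T) (A : ℝ) :
    ∃ θ : ℝ, 0 < θ ∧ A * θ ^ s ≤ T := by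
  have hlim : Tendsto (fun θ : ℝ ↦ A * θ ^ s) (nhds 0) (nhds 0) :=
    ((Real.continuous_rpow_const hs.le).const_mul A).tendsto' 0 0 (by simp [hs.ne'])
  obtain ⟨θ, hθ, hθ0⟩ :=
    (((hlim.eventually_le_const hT).filter_mono nhdsWithin_le_nhds).and
      (self_mem_nhdsWithin (s := Ioi (0 : ℝ)))).exists
  exact ⟨θ, hθ0, hθ⟩

lemma div_rpow_mul_rpow_eq {N : ℕ} {q c δ R : ℝ} (hq : Real.HolderConjugate N q) (hc : 0 ≤ c)
    (hδ : 0 < δ) (hR : 0 < R) :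
    (δ / R) ^ q * (c * δ) ^ (1 - 2 * q) = c ^ (1 - 2 * q) * (δ * R ^ N) ^ (1 - q) := by
  have hN : (N : ℝ) * (1 - q) = -q := by linarith [hq.mul_eq_add]
  rw [Real.div_rpow hδ.le hR.le, Real.mul_rpow hc hδ.le, Real.mul_rpow hδ.le (by positivity),
    ← Real.rpow_natCast R N, ← Real.rpow_mul hR.le, hN, Real.rpow_neg hR.le,
    show 1 - q = q + (1 - 2 * q) by ring, Real.rpow_add hδ]
  field_simp

variable {E : Type*} [NormedAddCommGroup E] [InnerProductSpace ℝ E] [FiniteDimensional ℝ E]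
  [MeasurableSpace E] [BorelSpace E]

theorem DeGiorgiClass.exists_mul_le_setIntegral_excess (μ : Measure E) [μ.IsAddHaarMeasure]
    {p q K c : ℝ} (hq : Real.HolderConjugate (Module.finrank ℝ E) q) (hp : 1 ≤ p) (hK : 0 ≤ K)
    (hc : 0 < c) :
    ∃ θ : ℝ, 0 < θ ∧ ∀ {v : E → ℝ} {U : Set E} {y : E} {R δ k : ℝ}, 0 < R → 0 < δ → 0 ≤ k →
      DeGiorgiClass μ v U p K (δ / R) (2 * δ) (16 / R) → closedBall y (R / 2) ⊆ U →
      (∀ x ∈ closedBall y (R / 2), v x ≤ k + 2 * δ) → k + c * δ < v y →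
      θ * (δ * R ^ Module.finrank ℝ E) ≤ ∫ x in closedBall y (R / 2), excess v k x ∂μ := by
  have hq1 : 0 < q - 1 := sub_pos.2 hq.symm.lt
  set S := lintegralPowLePowLIntegralFDerivConst μ q * 2 ^ (10 * q - 1) * (2 * (K + 1 + 32)) ^ q
  obtain ⟨θ, hθ0, hθ⟩ := exists_pos_mul_rpow_le hq1
    (show 0 < ((2 : ℝ) ^ (6 * q - 1)) ^ (-(q - 1)⁻¹) by positivity) (S * c ^ (1 - 2 * q))
  refine ⟨θ, hθ0, fun {v U y R δ k} hR hδ hk hv hBU hvB hvy ↦ ?_⟩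
  by_contra! hsmall
  set I := ∫ x in closedBall y (R / 2), excess v k x ∂μ
  have hI0 : 0 ≤ I := integral_nonneg fun x ↦ excess_nonneg v k x
  set V := δ * R ^ Module.finrank ℝ E
  have hV : 0 < V := by positivity
  refine hvy.not_ge (hv.le_add_of_setIntegral_excess_le (ℓ := 32) hq hp (by positivity)
    (by positivity) (by field_simp; norm_num) (by positivity) hk hR hBU hvB (by positivity) ?_)
  calc S * ((δ / R) ^ q * (c * δ) ^ (1 - 2 * q)) * I ^ (q - 1)
      ≤ S * (c ^ (1 - 2 * q) * V ^ (1 - q)) * (θ * V) ^ (q - 1) := by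
        rw [div_rpow_mul_rpow_eq hq hc.le hδ hR]
        gcongr
    _ = S * c ^ (1 - 2 * q) * θ ^ (q - 1) * (V ^ (1 - q) * V ^ (q - 1)) := by
        rw [Real.mul_rpow hθ0.le hV.le]
        ring
    _ = S * c ^ (1 - 2 * q) * θ ^ (q - 1) := by
        rw [← Real.rpow_add hV, sub_add_sub_cancel, sub_self, Real.rpow_zero, mul_one]
    _ ≤ _ := hθ

end ScaledDeGiorgi

section LocalEstimate

lemma two_mul_mul_div_rpow_le {p α c β δ R : ℝ} (hδ : 0 < δ) (hR : 0 < R)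
    (hβ : δ ^ (α - p + 1) * R ^ (p - α) * β ≤ c / 4) :
    2 * δ * β * (δ / R) ^ α ≤ c / 2 * (δ / R) ^ p := by
  have hscale : δ * (δ / R) ^ α = δ ^ (α - p + 1) * R ^ (p - α) * (δ / R) ^ p := by
    rw [Real.div_rpow hδ.le hR.le, Real.div_rpow hδ.le hR.le, Real.rpow_add_one hδ.ne',
      Real.rpow_sub hδ, Real.rpow_sub hR]
    field_simp
  calc 2 * δ * β * (δ / R) ^ α = 2 * (δ * (δ / R) ^ α) * β := by ring
    _ = 2 * (δ ^ (α - p + 1) * R ^ (p - α) * β) * (δ / R) ^ p := by rw [hscale]; ring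
    _ ≤ 2 * (c / 4) * (δ / R) ^ p := by gcongr
    _ = c / 2 * (δ / R) ^ p := by ring

lemma div_mul_rpow_mul_le_rpow_sub_one {p c κ δ R h : ℝ} (hδ : 0 < δ) (hR : 0 < R) (hκ : 0 < κ)
    (hle : h * (c * δ) ≤ κ * (δ / R) ^ p) : c / κ * R ^ p * h ≤ δ ^ (p - 1) := by
  have hRp : 0 < R ^ p := by positivity
  rw [Real.div_rpow hδ.le hR.le, mul_div_assoc', le_div_iff₀ hRp] at hle
  rw [Real.rpow_sub_one hδ.ne', le_div_iff₀ hδ]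
  calc c / κ * R ^ p * h * δ = h * (c * δ) * R ^ p / κ := by ring
    _ ≤ κ * δ ^ p / κ := by gcongr
    _ = δ ^ p := mul_div_cancel_left₀ _ hκ.ne'

section Excess

variable {E : Type*} [NormedAddCommGroup E] [MeasurableSpace E] [OpensMeasurableSpace E]
  {μ : Measure E} [IsFiniteMeasureOnCompacts μ] {v : E → ℝ} {k m d : ℝ}

lemma setIntegral_excess_le {B : Set E} (hB : IsCompact B) (hv : ContinuousOn v B) (hm : 0 ≤ m)
    (hvB : ∀ x ∈ B, v x ≤ k + m) : ∫ x in B, excess v k x ∂μ ≤ m * μ.real B := by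
  calc ∫ x in B, excess v k x ∂μ ≤ ∫ _ in B, m ∂μ :=
        setIntegral_mono_on ((continuousOn_excess hv k).integrableOn_compact hB)
          (continuousOn_const.integrableOn_compact hB) hB.measurableSet
          fun x hx ↦ excess_le hm (hvB x hx)
    _ = m * μ.real B := by rw [setIntegral_const, smul_eq_mul, mul_comm]

lemma rpow_mul_setIntegral_excess_add_le [InnerProductSpace ℝ E] [ProperSpace E] {y : E} {R p : ℝ}
    (hR : 0 < R) (hp : 0 ≤ p) (hd : 0 ≤ d) (hv : ContinuousOn v (closedBall y R)) :
    (1 / 4) ^ p * d * (∫ x in closedBall y (R / 2), excess v (k + d) x ∂μ) ≤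
      ∫ x in closedBall y R, excess v k x ^ 2 * quadCutoff y R x ^ p ∂μ := by
  have hη := isCutoff_quadCutoff y hR
  have hball : closedBall y (R / 2) ⊆ closedBall y R := closedBall_subset_closedBall (by linarith)
  have hint : IntegrableOn (fun x ↦ excess v k x ^ 2 * quadCutoff y R x ^ p) (closedBall y R) μ :=
    (((continuousOn_excess hv k).pow 2).mul (hη.contDiff.continuous.continuousOn.rpow_const
      fun _ _ ↦ .inr hp)).integrableOn_compact (isCompact_closedBall _ _)
  calc (1 / 4) ^ p * d * (∫ x in closedBall y (R / 2), excess v (k + d) x ∂μ)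
      ≤ ∫ x in closedBall y (R / 2), excess v k x ^ 2 * quadCutoff y R x ^ p ∂μ := by
        rw [← integral_const_mul]
        refine setIntegral_mono_on (((continuousOn_excess (hv.mono hball) _).integrableOn_compact
          (isCompact_closedBall _ _)).const_mul _) (hint.mono_set hball) measurableSet_closedBall
          fun x hx ↦ ?_
        have hcut : 1 / 4 ≤ quadCutoff y R x := by
          refine le_trans (le_of_eq ?_) (sq_div_le_quadCutoff hR (by linarith) hx)
          field_simp
          norm_num
        have hexcess : d * excess v (k + d) x ≤ excess v k x ^ 2 := by
          rw [excess_add hd]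
          rcases max_cases (excess v k x - d) 0 with ⟨h, _⟩ | ⟨h, _⟩ <;> rw [h] <;>
            nlinarith [sq_nonneg (excess v k x - d)]
        rw [mul_assoc, mul_comm]
        gcongr
    _ ≤ _ := setIntegral_mono_set hint
        (.of_forall fun x ↦ mul_nonneg (sq_nonneg _) (Real.rpow_nonneg (hη.nonneg x) p))
        hball.eventuallyLE

end Excess

variable {n : ℕ} {A : Euc n → Euc n → Euc n} {b a v : Euc n → ℝ} {U : Set (Euc n)} {y : Euc n}
  {p C₁ C₂ α τ m ℓ L R k d h : ℝ}

theorem IsWeakSol.deGiorgiClass (hw : IsWeakSol A b α a U v) (hA : StructCond A p C₁ C₂)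
    (hp : 1 < p) (hα₁ : p - 1 ≤ α) (hα₂ : α ≤ p) (hC₁ : 0 < C₁) (hC₂ : 0 ≤ C₂) (hU : IsOpen U)
    (hv : ContDiffOn ℝ 1 v U) (hb0 : ∀ x, 0 ≤ b x) (hb : LocallyIntegrable b)
    (ha : LocallyIntegrableOn a U) (ha0 : ∀ x ∈ U, 0 < v x → 0 ≤ a x)
    (hτ : 0 < τ) (hm : 0 ≤ m) (hℓ : 0 ≤ ℓ) (hmL : m * L ≤ ℓ * τ)
    (hbτ : ∀ᵐ x ∂volume.restrict U, m * b x * τ ^ α ≤ C₁ / 2 * τ ^ p) :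
    DeGiorgiClass volume v U p (caccioppoliConst p C₁ C₂ ℓ / C₁) τ m L where
  isOpen := hU
  contDiffOn := hv
  setIntegral_le k η B hk hB hBU hη hvB := by
    have hcacc := hw.caccioppoli hA hp hα₁ hα₂ hC₁ hC₂ hU hv hb0 hb ha
      (fun x hx hkx ↦ ha0 x hx (hk.trans_lt hkx)) hτ hm hℓ hmL hbτ hη hB hBU hvB
    simp only [gradient, LinearIsometryEquiv.norm_map, zero_mul, add_zero] at hcacc
    rw [div_mul_eq_mul_div, div_mul_eq_mul_div, le_div_iff₀' hC₁]
    exact hcacc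

/-- The Caccioppoli inequality used for its zeroth order term, which carries `h`. -/
lemma IsWeakSol.mul_setIntegral_excess_add_le (hw : IsWeakSol A b α a U v)
    (hA : StructCond A p C₁ C₂) (hp : 1 < p) (hα₁ : p - 1 ≤ α) (hα₂ : α ≤ p) (hC₁ : 0 < C₁)
    (hC₂ : 0 ≤ C₂) (hU : IsOpen U) (hv : ContDiffOn ℝ 1 v U) (hb0 : ∀ x, 0 ≤ b x)
    (hb : LocallyIntegrable b) (ha : LocallyIntegrableOn a U)
    (hah : ∀ x ∈ U, k < v x → h ≤ a x) (hh : 0 ≤ h) (hτ : 0 < τ) (hm : 0 ≤ m) (hℓ : 0 ≤ ℓ)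
    (hR : 0 < R) (hmR : m * (4 / R) ≤ ℓ * τ)
    (hbτ : ∀ᵐ x ∂volume.restrict U, m * b x * τ ^ α ≤ C₁ / 2 * τ ^ p)
    (hRU : closedBall y R ⊆ U) (hvR : ∀ x ∈ closedBall y R, v x ≤ k + m) (hd : 0 ≤ d) :
    h * ((1 / 4) ^ p * d * ∫ x in closedBall y (R / 2), excess v (k + d) x) ≤
      caccioppoliConst p C₁ C₂ ℓ * τ ^ p * (m * volume.real (closedBall y R)) := by
  have hη := isCutoff_quadCutoff y hR
  have hvc : ContinuousOn v (closedBall y R) := hv.continuousOn.mono hRU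
  have hcacc := hw.caccioppoli hA hp hα₁ hα₂ hC₁ hC₂ hU hv hb0 hb ha hah hτ hm hℓ hmR hbτ hη
    (isCompact_closedBall y R) hRU hvR
  have henergy : 0 ≤ C₁ * ∫ x in closedBall y R,
      excess v k x * (‖gradient v x‖ * quadCutoff y R x) ^ p :=
    mul_nonneg hC₁.le (integral_nonneg fun x ↦ mul_nonneg (excess_nonneg v k x)
      (Real.rpow_nonneg (mul_nonneg (norm_nonneg _) (hη.nonneg x)) p))
  calc _ ≤ h * ∫ x in closedBall y R, excess v k x ^ 2 * quadCutoff y R x ^ p :=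
        mul_le_mul_of_nonneg_left
          (rpow_mul_setIntegral_excess_add_le hR (by linarith) hd hvc) hh
    _ ≤ caccioppoliConst p C₁ C₂ ℓ * τ ^ p * ∫ x in closedBall y R, excess v k x := by linarith
    _ ≤ _ := by
        refine mul_le_mul_of_nonneg_left
          (setIntegral_excess_le (isCompact_closedBall y R) hvc hm hvR) ?_
        have := caccioppoliConst_pos (show 0 ≤ p by linarith) hC₁ hC₂ hℓ
        positivity

theorem IsWeakSol.exists_mul_rpow_mul_le (hn : 2 ≤ n) (hp : 1 < p) (hα₁ : p - 1 ≤ α)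
    (hα₂ : α ≤ p) (hC₁ : 0 < C₁) (hC₂ : 0 ≤ C₂) {γ : ℝ} (hγ0 : 0 < γ) (hγ1 : γ ≤ 1) :
    ∃ C : ℝ, 0 < C ∧ ∀ {A : Euc n → Euc n → Euc n} {b a v : Euc n → ℝ} {U : Set (Euc n)}
      {y : Euc n} {R δ h : ℝ}, IsWeakSol A b α a U v → StructCond A p C₁ C₂ → IsOpen U →
      ContDiffOn ℝ 1 v U → (∀ x, 0 ≤ b x) → LocallyIntegrable b → LocallyIntegrableOn a U →
      0 ≤ h → (∀ x ∈ U, 0 < v x → h ≤ a x) → 0 < R → 0 < δ → closedBall y R ⊆ U →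
      (∀ x ∈ closedBall y R, v x ≤ v y + δ) → γ * δ ≤ v y →
      (∀ᵐ x ∂volume.restrict U, δ ^ (α - p + 1) * R ^ (p - α) * b x ≤ C₁ / 4) →
      C * R ^ p * h ≤ δ ^ (p - 1) := by
  have hq := Real.HolderConjugate.conjExponent (show (1 : ℝ) < Module.finrank ℝ (Euc n) by
    rw [finrank_euclideanSpace_fin]
    exact_mod_cast hn)
  set κ := caccioppoliConst p C₁ C₂ 32
  have hκ : 0 < κ := caccioppoliConst_pos (by linarith) hC₁ hC₂ (by norm_num)
  obtain ⟨θ, hθ0, hθ⟩ := DeGiorgiClass.exists_mul_le_setIntegral_excess (volume : Measure (Euc n))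
    hq hp.le (div_nonneg hκ.le hC₁.le) (show 0 < γ / 4 by positivity)
  set ω := volume.real (ball (0 : Euc n) 1)
  have hω : 0 < ω := ENNReal.toReal_pos (measure_ball_pos _ _ one_pos).ne' measure_ball_lt_top.ne
  refine ⟨(1 / 4) ^ p * (γ / 2) * θ / (2 * κ * ω), by positivity, ?_⟩
  intro A b a v U y R δ h hw hA hU hv hb0 hb ha hh hah hR hδ hRU hvR hγy hbδ
  have hbτ : ∀ᵐ x ∂volume.restrict U, 2 * δ * b x * (δ / R) ^ α ≤ C₁ / 2 * (δ / R) ^ p :=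
    hbδ.mono fun x hx ↦ two_mul_mul_div_rpow_le hδ hR hx
  have hγδ : γ * δ ≤ δ := mul_le_of_le_one_left hδ.le hγ1
  have hγδ0 : 0 < γ * δ := by positivity
  have hhalf : closedBall y (R / 2) ⊆ closedBall y R := closedBall_subset_closedBall (by linarith)
  have hDG := hw.deGiorgiClass (m := 2 * δ) (ℓ := 32) (L := 16 / R) hA hp hα₁ hα₂ hC₁ hC₂ hU hv
    hb0 hb ha (fun x hx hvx ↦ hh.trans (hah x hx hvx)) (by positivity) (by positivity)
    (by norm_num) (by field_simp; norm_num) hbτ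
  have hlower := hθ (y := y) (k := v y - γ * δ + γ * δ / 2) hR hδ (by linarith) hDG
    (hhalf.trans hRU) (fun x hx ↦ (hvR x (hhalf hx)).trans (by linarith)) (by linarith)
  have hupper := hw.mul_setIntegral_excess_add_le (y := y) (k := v y - γ * δ) (m := 2 * δ)
    (ℓ := 32) (d := γ * δ / 2) hA hp hα₁ hα₂ hC₁ hC₂ hU hv hb0 hb ha
    (fun x hx hkx ↦ hah x hx (by linarith)) hh (by positivity) (by positivity) (by norm_num) hR
    (by field_simp; norm_num) hbτ hRU (fun x hx ↦ (hvR x hx).trans (by linarith)) (by positivity)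
  rw [Measure.addHaar_real_closedBall _ _ hR.le] at hupper
  have hscaled : h * ((1 / 4) ^ p * (γ * δ / 2) * (θ * (δ * R ^ Module.finrank ℝ (Euc n)))) ≤
      κ * (δ / R) ^ p * (2 * δ * (R ^ Module.finrank ℝ (Euc n) * ω)) :=
    le_trans (by gcongr) hupper
  refine div_mul_rpow_mul_le_rpow_sub_one hδ hR (show 0 < 2 * κ * ω by positivity) ?_
  refine le_of_mul_le_mul_right ?_ (show 0 < δ * R ^ Module.finrank ℝ (Euc n) by positivity)
  linarith

end LocalEstimate

section Annulus

variable {n : ℕ} {v b : Euc n → ℝ} {r r₁ r₂ R : ℝ}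

lemma isOpen_Ann : IsOpen (Ann n r₁ r₂) :=
  (isOpen_lt continuous_const continuous_norm).inter (isOpen_lt continuous_norm continuous_const)

lemma sphere_subset_Ann (hr₁ : r₁ < r) (hr₂ : r < r₂) : sphere 0 r ⊆ Ann n r₁ r₂ := by
  intro x hx
  rw [mem_sphere_zero_iff_norm] at hx
  exact ⟨hr₁.trans_eq hx.symm, hx.trans_lt hr₂⟩

lemma closedBall_subset_Ann {y : Euc n} (hy₁ : r₁ < ‖y‖ - R) (hy₂ : ‖y‖ + R < r₂) :
    closedBall y R ⊆ Ann n r₁ r₂ := by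
  intro x hx
  rw [mem_closedBall, dist_eq_norm] at hx
  obtain ⟨hlow, hup⟩ := abs_le.1 ((abs_norm_sub_norm_le x y).trans hx)
  exact ⟨by linarith, by linarith⟩

lemma le_sphMax {x : Euc n} (hv : ContinuousOn v (sphere 0 ‖x‖)) : v x ≤ sphMax v ‖x‖ :=
  le_csSup ((isCompact_sphere _ _).image_of_continuousOn hv).bddAbove
    (mem_image_of_mem v (mem_sphere_zero_iff_norm.2 rfl))

lemma exists_norm_eq_and_eq_sphMax (hn : n ≠ 0) (hr : 0 ≤ r) (hv : ContinuousOn v (sphere 0 r)) :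
    ∃ y : Euc n, ‖y‖ = r ∧ v y = sphMax v r := by
  have : Nonempty (Fin n) := Fin.pos_iff_nonempty.1 (Nat.pos_of_ne_zero hn)
  obtain ⟨y, hy, hvy⟩ := ((isCompact_sphere (0 : Euc n) r).image_of_continuousOn hv).sSup_mem
    ((NormedSpace.sphere_nonempty.2 hr).image v)
  exact ⟨y, mem_sphere_zero_iff_norm.1 hy, hvy⟩

lemma LocBdd.ae_le_essSup {U : Set (Euc n)} (hb : LocBdd b) (hU : Bornology.IsBounded U)
    (hUm : MeasurableSet U) :
    ∀ᵐ x ∂volume.restrict U, b x ≤ essSup b (volume.restrict U) := by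
  obtain ⟨C, hC⟩ := hb (closure U) hU.isCompact_closure
  refine _root_.ae_le_essSup ⟨C, eventually_map.2 ?_⟩
  filter_upwards [ae_restrict_mem hUm] with x hx
  exact hC x (subset_closure hx)

lemma isBounded_Ann : Bornology.IsBounded (Ann n r₁ r₂) :=
  isBounded_closedBall.subset fun _ hx ↦ mem_closedBall_zero_iff.2 hx.2.le

lemma exists_closedBall_subset_Ann_and_eq_sphMax (hn : n ≠ 0) (hr₁ : 0 ≤ r₁) (hr : r₁ < r₂)
    (hv : ContinuousOn v (Ann n r₁ r₂)) :
    ∃ y, closedBall y ((r₂ - r₁) / 4) ⊆ Ann n r₁ r₂ ∧ v y = sphMax v ((r₁ + r₂) / 2) := by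
  obtain ⟨y, hy, hvy⟩ := exists_norm_eq_and_eq_sphMax hn (by linarith : 0 ≤ (r₁ + r₂) / 2)
    (hv.mono (sphere_subset_Ann (by linarith) (by linarith)))
  exact ⟨y, closedBall_subset_Ann (by linarith) (by linarith), hvy⟩

lemma locallyIntegrable_indicator_pos {U : Set (Euc n)} (hU : IsOpen U) (hv : ContinuousOn v U)
    (h : ℝ) : LocallyIntegrable ({x ∈ U | 0 < v x}.indicator fun _ ↦ h) :=
  (locallyIntegrable_const h).indicator (hv.isOpen_inter_preimage hU isOpen_Ioi).measurableSet

end Annulus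

theorem stmt_17_general (n : ℕ) (hn : 2 ≤ n) (p C₁ C₂ α : ℝ) (hp : 1 < p)
    (hC₁ : 0 < C₁) (hC₂ : 0 ≤ C₂) (hα₁ : p - 1 ≤ α) (hα₂ : α ≤ p)
    (γ : ℝ) (hγ0 : 0 < γ) (hγ1 : γ < 1) :
    ∃ C : ℝ, 0 < C ∧
      ∀ (A : Euc n → Euc n → Euc n), StructCond A p C₁ C₂ →
      ∀ (b : Euc n → ℝ), Measurable b → (∀ x, 0 ≤ b x) → LocBdd b →
      ∀ (r₁ r₂ M₁ M₂ h : ℝ), 0 ≤ r₁ → r₁ < r₂ → 0 ≤ h →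
      ∀ v : Euc n → ℝ,
        ContDiffOn ℝ 1 v (Ann n r₁ r₂) →
        IsWeakSol A b α
          (Set.indicator {x ∈ Ann n r₁ r₂ | 0 < v x} fun _ => h) (Ann n r₁ r₂) v →
        (∀ ρ : ℝ, r₁ < ρ → ρ < r₂ → sphMax v ρ ∈ Set.Icc M₁ M₂) →
        M₁ < M₂ → γ * M₂ ≤ M₁ →
        (M₂ - M₁) ^ (α - p + 1) * (r₂ - r₁) ^ (p - α) *
            essSup b (volume.restrict (Ann n r₁ r₂)) ≤ C₁ / 4 →
        C * (r₂ - r₁) ^ p * h ≤ (M₂ - M₁) ^ (p - 1) := by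
  obtain ⟨C, hC, hlocal⟩ :=
    IsWeakSol.exists_mul_rpow_mul_le hn hp hα₁ hα₂ hC₁ hC₂ hγ0 hγ1.le
  refine ⟨C / 4 ^ p, by positivity, ?_⟩
  intro A hA b hbm hb0 hb r₁ r₂ M₁ M₂ h hr₁ hr h0 v hv hw hM hM₁₂ hγM hess
  have hδ : 0 < M₂ - M₁ := sub_pos.2 hM₁₂
  have hr0 : 0 < r₂ - r₁ := sub_pos.2 hr
  obtain ⟨y, hball, hvy⟩ :=
    exists_closedBall_subset_Ann_and_eq_sphMax (by lia) hr₁ hr hv.continuousOn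
  have hM₁y : M₁ ≤ v y := hvy ▸ (hM _ (by linarith) (by linarith)).1
  have hvM : ∀ x ∈ Ann n r₁ r₂, v x ≤ M₂ := fun x hx ↦
    (le_sphMax (hv.continuousOn.mono (sphere_subset_Ann hx.1 hx.2))).trans (hM _ hx.1 hx.2).2
  have hM₂ : 0 < M₂ := pos_of_mul_pos_right (by linarith : 0 < (1 - γ) * M₂) (by linarith)
  have hγδ : γ * (M₂ - M₁) ≤ v y := by
    have : 0 ≤ γ * M₁ := mul_nonneg hγ0.le ((by positivity : 0 ≤ γ * M₂).trans hγM)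
    linarith
  have hb_small : ∀ᵐ x ∂volume.restrict (Ann n r₁ r₂),
      (M₂ - M₁) ^ (α - p + 1) * ((r₂ - r₁) / 4) ^ (p - α) * b x ≤ C₁ / 4 := by
    filter_upwards [hb.ae_le_essSup isBounded_Ann isOpen_Ann.measurableSet] with x hx
    refine le_trans ?_ hess
    have := hb0 x
    gcongr
    linarith
  have hest := hlocal hw hA isOpen_Ann hv hb0 (hb.locallyIntegrable hbm hb0)
    ((locallyIntegrable_indicator_pos isOpen_Ann hv.continuousOn h).locallyIntegrableOn _) h0
    (fun x hx hvx ↦ (indicator_of_mem (s := {x ∈ Ann n r₁ r₂ | 0 < v x}) ⟨hx, hvx⟩ fun _ ↦ h).ge)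
    (by positivity) hδ hball (fun x hx ↦ (hvM x (hball hx)).trans (by linarith)) hγδ hb_small
  rw [Real.div_rpow hr0.le (by norm_num)] at hest
  exact le_of_eq_of_le (by ring) hest

/-- Lemma 4.8: if `M(·;v)` is nondecreasing on `[r₁, r₂]`,
`M(r₂;v) > M(r₁;v) ≥ γ M(r₂;v)` and the `b`-term is small
(`(M(r₂;v)-M(r₁;v))^{α-p+1}(r₂-r₁)^{p-α} ess sup b ≤ C₁/4`), then
`(M(r₂;v) - M(r₁;v))^{p-1} ≥ C (r₂ - r₁)^p h`. -/
theorem stmt_17 (n : ℕ) (hn : 2 ≤ n) (p C₁ C₂ α : ℝ) (hp : 1 < p)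
    (hC₁ : 0 < C₁) (hC₂ : 0 < C₂) (hα₁ : p - 1 ≤ α) (hα₂ : α ≤ p)
    (γ : ℝ) (hγ0 : 0 < γ) (hγ1 : γ < 1) :
    ∃ C : ℝ, 0 < C ∧
      ∀ (A : Euc n → Euc n → Euc n), StructCond A p C₁ C₂ →
      ∀ (b : Euc n → ℝ), Measurable b → (∀ x, 0 ≤ b x) → LocBdd b →
      ∀ (r₁ r₂ h : ℝ), 0 < r₁ → r₁ < r₂ → 0 ≤ h →
      ∀ v : Euc n → ℝ,
        ContinuousOn v {x : Euc n | r₁ ≤ ‖x‖ ∧ ‖x‖ ≤ r₂} →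
        (∀ x, r₁ ≤ ‖x‖ → ‖x‖ ≤ r₂ → 0 ≤ v x) →
        ContDiffOn ℝ 1 v (Ann n r₁ r₂) →
        IsWeakSol A b α
          (Set.indicator {x ∈ Ann n r₁ r₂ | 0 < v x} fun _ => h) (Ann n r₁ r₂) v →
        (∀ ρ₁ ρ₂ : ℝ, r₁ ≤ ρ₁ → ρ₁ ≤ ρ₂ → ρ₂ ≤ r₂ → sphMax v ρ₁ ≤ sphMax v ρ₂) →
        sphMax v r₁ < sphMax v r₂ → γ * sphMax v r₂ ≤ sphMax v r₁ →
        (sphMax v r₂ - sphMax v r₁) ^ (α - p + 1) * (r₂ - r₁) ^ (p - α) *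
            essSup b (volume.restrict (Ann n r₁ r₂)) ≤ C₁ / 4 →
        C * (r₂ - r₁) ^ p * h ≤ (sphMax v r₂ - sphMax v r₁) ^ (p - 1) := by
  obtain ⟨C, hC, hbound⟩ := stmt_17_general n hn p C₁ C₂ α hp hC₁ hC₂.le hα₁ hα₂ γ hγ0 hγ1
  exact ⟨C, hC, fun A hA b hbm hb0 hb r₁ r₂ h hr₁ hr h0 v _ _ hv hw hmono ↦
    hbound A hA b hbm hb0 hb r₁ r₂ _ _ h hr₁.le hr h0 v hv hw fun ρ hρ₁ hρ₂ ↦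
      ⟨hmono r₁ ρ le_rfl hρ₁.le hρ₂.le, hmono ρ r₂ hρ₁.le hρ₂.le le_rfl⟩⟩
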